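/- Let n ≥ 1, ν > 0, and let h = (h₁,…,hₙ) : ℝⁿ → ℝⁿ be smooth and satisfy the polynomial decay condition. Then the Cauchy problem for the multivariate viscous Burgers system on [0,∞)×ℝⁿ with initial data h has a global classical solution u = (u₁,…,uₙ) whose components lie in C^{1,2}([0,∞)×ℝⁿ). Moreover, there exist constants C₀ ≥ max_{1≤i≤n} sup_{x∈ℝⁿ}|hᵢ(x)| and C*ₙ > 0 such that, setting ρ_l := 1/(4·C*ₙ·(C₀ + l − 1)) for l ≥ 1 and T_l := ρ₁ + ⋯ + ρ_l (so that T_l → ∞ as l → ∞), one has max_{1≤i≤n} |uᵢ|_{1,2;[0,T_l]×ℝⁿ} ≤ C*ₙ·(C₀ + l) for every l ≥ 1; in particular the growth of the solution in the |·|_{1,2} norm is at most linear in the time-step index l. -/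

import Mathlib

open Set Filter

noncomputable section

abbrev E (n : ℕ) := EuclideanSpace ℝ (Fin n)

/-- Partial derivative of `f` in the `j`-th coordinate direction. -/
noncomputable def pd {n : ℕ} (f : E n → ℝ) (j : Fin n) (x : E n) : ℝ :=
  fderiv ℝ f x (EuclideanSpace.single j 1)

/-- Supremum norm `|w|₀` over the domain `[0,T] × ℝⁿ`. -/
noncomputable def sup0 {n : ℕ} (T : ℝ) (w : ℝ → E n → ℝ) : ℝ :=
  ⨆ (t : Icc (0:ℝ) T) (x : E n), |w t.1 x|

/-- The norm `|w|_{1,2;[0,T]×ℝⁿ} = |w|₀ + Σᵢ|∂w/∂xᵢ|₀ + |∂w/∂t|₀ + Σ_{i,j}|∂²w/∂xᵢ∂xⱼ|₀`. -/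
noncomputable def norm12 {n : ℕ} (T : ℝ) (w : ℝ → E n → ℝ) : ℝ :=
  sup0 T w + (∑ j : Fin n, sup0 T fun t x => pd (w t) j x)
    + sup0 T (fun t x => deriv (fun s => w s x) t)
    + ∑ j : Fin n, ∑ k : Fin n, sup0 T fun t x => pd (pd (w t) j) k x

section Gaussian

open MeasureTheory Topology

variable {n : ℕ}

lemma integrable_exp_neg_mul_sq_norm {b : ℝ} (hb : 0 < b) :
    Integrable (fun z : E n => Real.exp (-b * ‖z‖ ^ 2)) := by
  refine Integrable.of_integral_ne_zero ?_
  rw [GaussianFourier.integral_rexp_neg_mul_sq_norm hb]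
  positivity

/-- The unnormalised density of the standard Gaussian. -/
def gaussDensity (z : E n) : ℝ := Real.exp (-(1 / 2) * ‖z‖ ^ 2)

/-- The total mass of `gaussDensity`. -/
def gaussMass (n : ℕ) : ℝ := ∫ z : E n, gaussDensity z

lemma gaussDensity_pos (z : E n) : 0 < gaussDensity z := Real.exp_pos _

lemma continuous_gaussDensity : Continuous (gaussDensity (n := n)) := by
  unfold gaussDensity; fun_prop

lemma integrable_gaussDensity : Integrable (gaussDensity (n := n)) :=
  integrable_exp_neg_mul_sq_norm (by norm_num)

lemma gaussMass_pos : 0 < gaussMass n := by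
  have := GaussianFourier.integral_rexp_neg_mul_sq_norm (V := E n) (b := 1 / 2) (by norm_num)
  unfold gaussMass gaussDensity
  rw [this]
  positivity

/-- The standard Gaussian measure. -/
def gauss (n : ℕ) : Measure (E n) :=
  volume.withDensity fun z => ENNReal.ofReal (gaussDensity z / gaussMass n)

lemma integral_gauss (f : E n → ℝ) :
    ∫ z, f z ∂gauss n = (gaussMass n)⁻¹ * ∫ z, f z * gaussDensity z := by
  unfold gauss
  rw [integral_withDensity_eq_integral_toReal_smul
    ((continuous_gaussDensity.div_const _).measurable.ennreal_ofReal)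
    (by simp), ← integral_const_mul]
  refine integral_congr_ae (.of_forall fun z => ?_)
  have : 0 ≤ gaussDensity z / gaussMass n := (div_pos (gaussDensity_pos z) gaussMass_pos).le
  simp only [ENNReal.toReal_ofReal this, smul_eq_mul]
  ring

lemma integrable_gauss_iff (f : E n → ℝ) :
    Integrable f (gauss n) ↔ Integrable fun z => f z * gaussDensity z := by
  unfold gauss
  rw [integrable_withDensity_iff_integrable_smul'
    ((continuous_gaussDensity.div_const _).measurable.ennreal_ofReal) (by simp)]
  rw [← integrable_const_mul_iff (isUnit_iff_ne_zero.2 (inv_ne_zero (gaussMass_pos (n := n)).ne'))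
    (fun z => f z * gaussDensity z)]
  refine integrable_congr (.of_forall fun z => ?_)
  have : 0 ≤ gaussDensity z / gaussMass n := (div_pos (gaussDensity_pos z) gaussMass_pos).le
  simp only [ENNReal.toReal_ofReal this, smul_eq_mul]
  ring

instance : IsProbabilityMeasure (gauss n) := by
  constructor
  unfold gauss
  rw [withDensity_apply _ MeasurableSet.univ, Measure.restrict_univ,
    ← ofReal_integral_eq_lintegral_ofReal (integrable_gaussDensity.div_const _)
      (.of_forall fun z => (div_pos (gaussDensity_pos z) gaussMass_pos).le),
    integral_div]
  have := gaussMass_pos (n := n)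
  rw [← gaussMass, div_self this.ne', ENNReal.ofReal_one]

lemma integrable_norm_gauss : Integrable (fun z : E n => ‖z‖) (gauss n) := by
  rw [integrable_gauss_iff]
  refine ((integrable_exp_neg_mul_sq_norm (n := n) (b := 1 / 4) (by norm_num)).const_mul 2).mono'
    (continuous_norm.mul continuous_gaussDensity).aestronglyMeasurable (.of_forall fun z => ?_)
  have h1 : ‖z‖ ≤ 2 * Real.exp (1 / 4 * ‖z‖ ^ 2) := by
    have := Real.add_one_le_exp (1 / 4 * ‖z‖ ^ 2)
    nlinarith [sq_nonneg (‖z‖ - 1)]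
  rw [Real.norm_of_nonneg (mul_nonneg (norm_nonneg _) (gaussDensity_pos z).le)]
  calc ‖z‖ * gaussDensity z ≤ 2 * Real.exp (1 / 4 * ‖z‖ ^ 2) * gaussDensity z :=
        mul_le_mul_of_nonneg_right h1 (gaussDensity_pos z).le
    _ = 2 * Real.exp (-(1 / 4) * ‖z‖ ^ 2) := by
        unfold gaussDensity
        rw [mul_assoc, ← Real.exp_add]; ring_nf

lemma abs_coord_le (z : E n) (j : Fin n) : |z j| ≤ ‖z‖ := by
  simpa using PiLp.norm_apply_le z j

lemma integrable_coord_mul_gauss {g : E n → ℝ} (hg : Continuous g) {C : ℝ}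
    (hC : ∀ x, |g x| ≤ C) (j : Fin n) : Integrable (fun z => z j * g z) (gauss n) := by
  refine (integrable_norm_gauss.mul_const C).mono'
    (by fun_prop) (.of_forall fun z => ?_)
  rw [Real.norm_eq_abs, abs_mul]
  exact mul_le_mul (abs_coord_le z j) (hC z) (abs_nonneg _) (norm_nonneg _)

lemma integrable_of_bounded {Ω : Type*} [MeasurableSpace Ω] [TopologicalSpace Ω]
    [OpensMeasurableSpace Ω] {μ : Measure Ω}
    [IsFiniteMeasure μ] {g : Ω → ℝ} (hg : Continuous g) {C : ℝ} (hC : ∀ x, |g x| ≤ C) :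
    Integrable g μ :=
  (integrable_const C).mono' hg.measurable.aestronglyMeasurable (.of_forall hC)

/-- Gaussian integration by parts. -/
lemma integral_pd_gauss {g : E n → ℝ} (hg : Differentiable ℝ g) (j : Fin n)
    (hg' : Continuous (pd g j)) {C C' : ℝ} (hC : ∀ x, |g x| ≤ C) (hC' : ∀ x, |pd g j x| ≤ C') :
    ∫ z, pd g j z ∂gauss n = ∫ z, z j * g z ∂gauss n := by
  rw [integral_gauss, integral_gauss]
  congr 1
  have hd : ∀ z : E n, HasFDerivAt (gaussDensity (n := n))
      (gaussDensity z • (-(1 / 2) : ℝ) • ((2 : ℕ) • innerSL ℝ z)) z := fun z => by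
    have := ((hasStrictFDerivAt_norm_sq z).hasFDerivAt.const_mul (-(1 / 2) : ℝ)).exp
    exact this
  have hd' : ∀ z : E n, fderiv ℝ (gaussDensity (n := n)) z (EuclideanSpace.single j 1)
      = -(z j * gaussDensity z) := fun z => by
    rw [(hd z).fderiv]
    simp [EuclideanSpace.inner_single_right]
    ring
  have key := integral_mul_fderiv_eq_neg_fderiv_mul_of_integrable (μ := (volume : Measure (E n)))
    (f := gaussDensity (n := n)) (g := g) (v := EuclideanSpace.single j 1)
    (by
      have := (integrable_gauss_iff _).1 (integrable_coord_mul_gauss hg.continuous hC j)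
      refine this.neg.congr (.of_forall fun z => ?_)
      simp only [hd', Pi.neg_apply]; ring)
    (by
      have := (integrable_gauss_iff _).1 (integrable_of_bounded (μ := gauss n) hg' hC')
      refine this.congr (.of_forall fun z => ?_)
      simp only [pd]; ring)
    (by
      have := (integrable_gauss_iff _).1 (integrable_of_bounded (μ := gauss n) hg.continuous hC)
      refine this.congr (.of_forall fun z => ?_)
      ring)
    (fun z _ => (hd z).differentiableAt) (fun z _ => hg z)
  calc ∫ z, pd g j z * gaussDensity z
      = ∫ z, gaussDensity z * fderiv ℝ g z (EuclideanSpace.single j 1) := by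
        refine integral_congr_ae (.of_forall fun z => ?_)
        simp only [pd]; ring
    _ = _ := key
    _ = ∫ z, z j * g z * gaussDensity z := by
        rw [← integral_neg]
        refine integral_congr_ae (.of_forall fun z => ?_)
        simp only [hd']; ring

end Gaussian

section Regularity

open MeasureTheory Topology

variable {n : ℕ}

lemma fderiv_eq_sum_pd (f : E n → ℝ) (x : E n) :
    fderiv ℝ f x = ∑ j, pd f j x • (EuclideanSpace.proj j : E n →L[ℝ] ℝ) := by
  ext v
  have hv : v = ∑ j, v j • EuclideanSpace.single j (1 : ℝ) := by
    ext i; simp [Finset.sum_apply, Pi.single_apply]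
  conv_lhs => rw [hv]
  simp [pd, mul_comm]

lemma norm_sum_smul_proj_le (p : Fin n → ℝ) :
    ‖∑ j, p j • (EuclideanSpace.proj j : E n →L[ℝ] ℝ)‖ ≤ ∑ j, |p j| := by
  refine (norm_sum_le _ _).trans (Finset.sum_le_sum fun j _ => ?_)
  rw [norm_smul, Real.norm_eq_abs]
  refine mul_le_of_le_one_right (abs_nonneg _) ?_
  exact ContinuousLinearMap.opNorm_le_bound _ zero_le_one fun v => by
    simpa using abs_coord_le v j

lemma HasFDerivAt.pd_eq {f : E n → ℝ} {p : Fin n → ℝ} {x : E n}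
    (hf : HasFDerivAt f (∑ j, p j • (EuclideanSpace.proj j : E n →L[ℝ] ℝ)) x) (j : Fin n) :
    pd f j x = p j := by
  rw [pd, hf.fderiv]
  simp

/-- Jointly continuous functions which are bounded on `(-∞, T] × ℝⁿ` for every `T`. -/
structure Reg0 (f : ℝ → E n → ℝ) : Prop where
  cont : Continuous fun p : ℝ × E n => f p.1 p.2
  bdd : ∀ T, ∃ C, ∀ t ≤ T, ∀ x, |f t x| ≤ C

/-- Functions all of whose spatial derivatives of order at most `m` satisfy `Reg0`. -/
def Reg : ℕ → (ℝ → E n → ℝ) → Prop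
  | 0, f => Reg0 f
  | m + 1, f => Reg0 f ∧ (∀ t, Differentiable ℝ (f t)) ∧ ∀ j, Reg m fun t => pd (f t) j

lemma Reg.reg0 {m : ℕ} {f : ℝ → E n → ℝ} (hf : Reg m f) : Reg0 f := by
  cases m with
  | zero => exact hf
  | succ m => exact hf.1

lemma Reg.of_succ {m : ℕ} : ∀ {f : ℝ → E n → ℝ}, Reg (m + 1) f → Reg m f := by
  induction m with
  | zero => exact fun hf => hf.1
  | succ m ih => exact fun hf => ⟨hf.1, hf.2.1, fun j => ih (hf.2.2 j)⟩

lemma Reg0.add {f g : ℝ → E n → ℝ} (hf : Reg0 f) (hg : Reg0 g) :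
    Reg0 fun t x => f t x + g t x := by
  refine ⟨hf.cont.add hg.cont, fun T => ?_⟩
  obtain ⟨C, hC⟩ := hf.bdd T
  obtain ⟨D, hD⟩ := hg.bdd T
  exact ⟨C + D, fun t ht x => (abs_add_le _ _).trans (add_le_add (hC t ht x) (hD t ht x))⟩

lemma Reg0.mul {f g : ℝ → E n → ℝ} (hf : Reg0 f) (hg : Reg0 g) :
    Reg0 fun t x => f t x * g t x := by
  refine ⟨hf.cont.mul hg.cont, fun T => ?_⟩
  obtain ⟨C, hC⟩ := hf.bdd T
  obtain ⟨D, hD⟩ := hg.bdd T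
  refine ⟨C * D, fun t ht x => ?_⟩
  rw [abs_mul]
  exact mul_le_mul (hC t ht x) (hD t ht x) (abs_nonneg _) ((abs_nonneg _).trans (hC t ht x))

lemma Reg0.comp {χ : ℝ → ℝ} (hχ : Continuous χ) {f : ℝ → E n → ℝ} (hf : Reg0 f) :
    Reg0 fun t x => χ (f t x) := by
  refine ⟨hχ.comp hf.cont, fun T => ?_⟩
  obtain ⟨C, hC⟩ := hf.bdd T
  obtain ⟨D, hD⟩ := (isCompact_Icc (a := -C) (b := C)).exists_bound_of_continuousOn hχ.continuousOn
  exact ⟨D, fun t ht x => hD _ (abs_le.1 (hC t ht x))⟩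

lemma pd_add {f g : E n → ℝ} {x : E n} (hf : DifferentiableAt ℝ f x)
    (hg : DifferentiableAt ℝ g x) (j : Fin n) :
    pd (fun y => f y + g y) j x = pd f j x + pd g j x := by
  simp [pd, fderiv_fun_add hf hg]

lemma pd_sub {f g : E n → ℝ} {x : E n} (hf : DifferentiableAt ℝ f x)
    (hg : DifferentiableAt ℝ g x) (j : Fin n) :
    pd (fun y => f y - g y) j x = pd f j x - pd g j x := by
  simp [pd, fderiv_fun_sub hf hg]

lemma pd_mul {f g : E n → ℝ} {x : E n} (hf : DifferentiableAt ℝ f x)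
    (hg : DifferentiableAt ℝ g x) (j : Fin n) :
    pd (fun y => f y * g y) j x = pd f j x * g x + f x * pd g j x := by
  simp only [pd, fderiv_fun_mul hf hg]
  simp
  ring

lemma pd_neg (f : E n → ℝ) (x : E n) (j : Fin n) :
    pd (fun y => -f y) j x = -pd f j x := by
  simp [pd, fderiv_fun_neg]

lemma pd_const_mul {f : E n → ℝ} {x : E n} (hf : DifferentiableAt ℝ f x) (c : ℝ) (j : Fin n) :
    pd (fun y => c * f y) j x = c * pd f j x := by
  simp [pd, fderiv_const_mul hf]

lemma pd_sum {ι : Type*} (s : Finset ι) {f : ι → E n → ℝ} {x : E n}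
    (hf : ∀ i ∈ s, DifferentiableAt ℝ (f i) x) (j : Fin n) :
    pd (fun y => ∑ i ∈ s, f i y) j x = ∑ i ∈ s, pd (f i) j x := by
  simp [pd, fderiv_fun_sum hf]

lemma pd_comp {χ : ℝ → ℝ} (hχ : Differentiable ℝ χ) {f : E n → ℝ} {x : E n}
    (hf : DifferentiableAt ℝ f x) (j : Fin n) :
    pd (fun y => χ (f y)) j x = deriv χ (f x) * pd f j x := by
  have := (hχ (f x)).hasDerivAt.comp_hasFDerivAt x hf.hasFDerivAt
  have h2 : fderiv ℝ (fun y => χ (f y)) x = deriv χ (f x) • fderiv ℝ f x := this.fderiv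
  simp [pd, h2]

lemma Reg.add {m : ℕ} : ∀ {f g : ℝ → E n → ℝ}, Reg m f → Reg m g →
    Reg m fun t x => f t x + g t x := by
  induction m with
  | zero => exact fun hf hg => Reg0.add hf hg
  | succ m ih =>
    intro f g hf hg
    refine ⟨hf.1.add hg.1, fun t => (hf.2.1 t).add (hg.2.1 t), fun j => ?_⟩
    have : (fun t => pd (fun x => f t x + g t x) j)
        = fun t x => pd (f t) j x + pd (g t) j x := by
      ext t x; exact pd_add (hf.2.1 t x) (hg.2.1 t x) j
    rw [this]
    exact ih (hf.2.2 j) (hg.2.2 j)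

lemma Reg.mul {m : ℕ} : ∀ {f g : ℝ → E n → ℝ}, Reg m f → Reg m g →
    Reg m fun t x => f t x * g t x := by
  induction m with
  | zero => exact fun hf hg => Reg0.mul hf hg
  | succ m ih =>
    intro f g hf hg
    refine ⟨hf.1.mul hg.1, fun t => (hf.2.1 t).mul (hg.2.1 t), fun j => ?_⟩
    have : (fun t => pd (fun x => f t x * g t x) j)
        = fun t x => pd (f t) j x * g t x + f t x * pd (g t) j x := by
      ext t x; exact pd_mul (hf.2.1 t x) (hg.2.1 t x) j
    rw [this]
    exact (ih (hf.2.2 j) hg.of_succ).add (ih hf.of_succ (hg.2.2 j))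

lemma Reg.const (c : ℝ) {m : ℕ} : Reg m fun (_ : ℝ) (_ : E n) => c := by
  induction m generalizing c with
  | zero => exact ⟨continuous_const, fun T => ⟨|c|, fun _ _ _ => le_rfl⟩⟩
  | succ m ih =>
    refine ⟨⟨continuous_const, fun T => ⟨|c|, fun _ _ _ => le_rfl⟩⟩,
      fun t => differentiable_const _, fun j => ?_⟩
    have : (fun (_ : ℝ) => pd (fun (_ : E n) => c) j) = fun _ _ => 0 := by
      ext t x; simp [pd]
    rw [this]
    exact ih 0

lemma Reg.neg {m : ℕ} {f : ℝ → E n → ℝ} (hf : Reg m f) : Reg m fun t x => -f t x := by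
  simpa using (Reg.const (-1)).mul hf

lemma Reg.sub {m : ℕ} {f g : ℝ → E n → ℝ} (hf : Reg m f) (hg : Reg m g) :
    Reg m fun t x => f t x - g t x := by
  simpa [sub_eq_add_neg] using hf.add hg.neg

lemma Reg.sum {m : ℕ} {ι : Type*} (s : Finset ι) {f : ι → ℝ → E n → ℝ}
    (hf : ∀ i, Reg m (f i)) : Reg m fun t x => ∑ i ∈ s, f i t x := by
  classical
  induction s using Finset.induction_on with
  | empty => simpa using Reg.const 0
  | insert a s ha ih =>
    simp only [Finset.sum_insert ha]
    exact (hf a).add ih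

lemma Reg.comp {m : ℕ} : ∀ {χ : ℝ → ℝ}, ContDiff ℝ (⊤ : ℕ∞) χ → ∀ {f : ℝ → E n → ℝ},
    Reg m f → Reg m fun t x => χ (f t x) := by
  induction m with
  | zero => exact fun hχ f hf => Reg0.comp hχ.continuous hf
  | succ m ih =>
    intro χ hχ f hf
    have hd : Differentiable ℝ χ := hχ.differentiable (by simp)
    refine ⟨hf.1.comp hχ.continuous, fun t => hd.comp (hf.2.1 t), fun j => ?_⟩
    have : (fun t => pd (fun x => χ (f t x)) j)
        = fun t x => deriv χ (f t x) * pd (f t) j x := by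
      ext t x; exact pd_comp hd (hf.2.1 t x) j
    rw [this]
    refine (ih ?_ hf.of_succ).mul (hf.2.2 j)
    exact (contDiff_infty_iff_deriv.1 hχ).2

lemma Reg.of_bounded_iteratedFDeriv {m : ℕ} : ∀ {f : E n → ℝ}, ContDiff ℝ (⊤ : ℕ∞) f →
    (∀ k, ∃ C, ∀ x, ‖iteratedFDeriv ℝ k f x‖ ≤ C) → Reg m fun _ => f := by
  have base : ∀ {f : E n → ℝ}, ContDiff ℝ (⊤ : ℕ∞) f →
      (∀ k, ∃ C, ∀ x, ‖iteratedFDeriv ℝ k f x‖ ≤ C) → Reg0 fun (_ : ℝ) => f := by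
    intro f hf hb
    refine ⟨hf.continuous.comp continuous_snd, fun T => ?_⟩
    obtain ⟨C, hC⟩ := hb 0
    exact ⟨C, fun _ _ x => by simpa using hC x⟩
  induction m with
  | zero => exact base
  | succ m ih =>
    intro f hf hb
    refine ⟨base hf hb, fun t => hf.differentiable (by simp), fun j => ?_⟩
    have hf' : ContDiff ℝ (⊤ : ℕ∞) (fderiv ℝ f) := hf.fderiv_right (by simp)
    set L : (E n →L[ℝ] ℝ) →L[ℝ] ℝ :=
      ContinuousLinearMap.apply ℝ ℝ (EuclideanSpace.single j (1 : ℝ)) with hL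
    have hpd : pd f j = L ∘ fderiv ℝ f := by ext x; simp [pd, hL]
    refine ih ?_ fun k => ?_
    · rw [hpd]
      exact L.contDiff.comp hf'
    · obtain ⟨C, hC⟩ := hb (k + 1)
      refine ⟨‖L‖ * C, fun x => ?_⟩
      rw [hpd]
      refine (L.norm_iteratedFDeriv_comp_left hf'.contDiffAt (by exact_mod_cast le_top)).trans ?_
      rw [norm_iteratedFDeriv_fderiv]
      exact mul_le_mul_of_nonneg_left (hC x) (norm_nonneg _)

end Regularity

section Averages

open MeasureTheory Topology

variable {n : ℕ}

section Average

variable {Ω : Type*} [TopologicalSpace Ω] [MeasurableSpace Ω] [OpensMeasurableSpace Ω]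

/-- Average over `ω` of the shifts of `f` to time `a t ω` and position `x + b t ω`. -/
def avg (μ : Measure Ω) (a : ℝ → Ω → ℝ) (b : ℝ → Ω → E n) (f : ℝ → E n → ℝ) (t : ℝ) (x : E n) : ℝ :=
  ∫ ω, f (a t ω) (x + b t ω) ∂μ

variable {μ : Measure Ω} [IsFiniteMeasure μ] {a : ℝ → Ω → ℝ} {b : ℝ → Ω → E n}

lemma Reg0.integrable_shift (ha : Continuous fun p : ℝ × Ω => a p.1 p.2)
    (hb : Continuous fun p : ℝ × Ω => b p.1 p.2) (hle : ∀ t ω, a t ω ≤ max t 0)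
    {f : ℝ → E n → ℝ} (hf : Reg0 f) (t : ℝ) (x : E n) :
    Integrable (fun ω => f (a t ω) (x + b t ω)) μ := by
  obtain ⟨C, hC⟩ := hf.bdd (max t 0)
  have h1 : Continuous fun ω => a t ω := ha.comp (by fun_prop : Continuous fun ω : Ω => (t, ω))
  have h2 : Continuous fun ω => b t ω := hb.comp (by fun_prop : Continuous fun ω : Ω => (t, ω))
  exact integrable_of_bounded (hf.cont.comp (h1.prodMk (continuous_const.add h2)))
    fun ω => hC _ (hle t ω) _

lemma Reg0.avg (ha : Continuous fun p : ℝ × Ω => a p.1 p.2)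
    (hb : Continuous fun p : ℝ × Ω => b p.1 p.2) (hle : ∀ t ω, a t ω ≤ max t 0)
    {f : ℝ → E n → ℝ} (hf : Reg0 f) : Reg0 (avg μ a b f) := by
  refine ⟨?_, fun T => ?_⟩
  · refine continuous_iff_continuousAt.2 fun p₀ => ?_
    obtain ⟨C, hC⟩ := hf.bdd (max (p₀.1 + 1) 0)
    have hev : ∀ᶠ p : ℝ × E n in 𝓝 p₀, p.1 < p₀.1 + 1 :=
      (continuous_fst.tendsto p₀).eventually_lt_const (by linarith)
    refine continuousAt_of_dominated (bound := fun _ => C)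
      (.of_forall fun p => (hf.integrable_shift ha hb hle p.1 p.2).1) ?_
      (integrable_const C) (.of_forall fun ω => ?_)
    · filter_upwards [hev] with p hp
      exact .of_forall fun ω => hC _ ((hle _ _).trans (max_le_max hp.le le_rfl)) _
    · have h1 : Continuous fun p : ℝ × E n => a p.1 ω :=
        ha.comp (by fun_prop : Continuous fun p : ℝ × E n => (p.1, ω))
      have h2 : Continuous fun p : ℝ × E n => b p.1 ω :=
        hb.comp (by fun_prop : Continuous fun p : ℝ × E n => (p.1, ω))
      exact (hf.cont.comp (h1.prodMk (continuous_snd.add h2))).continuousAt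
  · obtain ⟨C, hC⟩ := hf.bdd (max T 0)
    refine ⟨C * μ.real univ, fun t ht x => ?_⟩
    rw [_root_.avg, ← Real.norm_eq_abs]
    refine norm_integral_le_of_norm_le_const (.of_forall fun ω => ?_)
    exact hC _ ((hle t ω).trans (max_le_max ht le_rfl)) _

lemma Reg.hasFDerivAt_avg (ha : Continuous fun p : ℝ × Ω => a p.1 p.2)
    (hb : Continuous fun p : ℝ × Ω => b p.1 p.2) (hle : ∀ t ω, a t ω ≤ max t 0)
    {f : ℝ → E n → ℝ} (hf : Reg 1 f) (t : ℝ) (x : E n) :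
    HasFDerivAt (_root_.avg μ a b f t) (∑ j, _root_.avg μ a b (fun s => pd (f s) j) t x •
      (EuclideanSpace.proj j : E n →L[ℝ] ℝ)) x := by
  choose C hC using fun j => (hf.2.2 j).bdd (max t 0)
  have key := hasFDerivAt_integral_of_dominated_of_fderiv_le (𝕜 := ℝ) (μ := μ) (s := univ)
    (x₀ := x) (F := fun x ω => f (a t ω) (x + b t ω))
    (F' := fun x ω => ∑ j, pd (f (a t ω)) j (x + b t ω) •
      (EuclideanSpace.proj j : E n →L[ℝ] ℝ)) (bound := fun _ => ∑ j, C j) univ_mem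
    (.of_forall fun x => (hf.1.integrable_shift ha hb hle t x).1)
    (hf.1.integrable_shift ha hb hle t x) ?_ ?_ (integrable_const _) ?_
  · rw [integral_finsetSum _ fun j _ =>
      (Reg0.integrable_shift ha hb hle (hf.2.2 j) t x).smul_const _] at key
    simp only [integral_smul_const] at key
    exact key
  · exact Finset.aestronglyMeasurable_fun_sum _ fun j _ =>
      ((Reg0.integrable_shift ha hb hle (hf.2.2 j) t x).smul_const _).1
  · exact .of_forall fun ω y _ => (norm_sum_smul_proj_le _).trans
      (Finset.sum_le_sum fun j _ => hC j _ (hle t ω) _)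
  · refine .of_forall fun ω y _ => ?_
    have := (hf.2.1 (a t ω) (y + b t ω)).hasFDerivAt
    rw [fderiv_eq_sum_pd] at this
    exact this.comp y ((hasFDerivAt_id y).add_const (b t ω))

lemma Reg.pd_avg (ha : Continuous fun p : ℝ × Ω => a p.1 p.2)
    (hb : Continuous fun p : ℝ × Ω => b p.1 p.2) (hle : ∀ t ω, a t ω ≤ max t 0)
    {f : ℝ → E n → ℝ} (hf : Reg 1 f) (t : ℝ) (j : Fin n) (x : E n) :
    pd (_root_.avg μ a b f t) j x = _root_.avg μ a b (fun s => pd (f s) j) t x :=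
  (hf.hasFDerivAt_avg ha hb hle t x).pd_eq j

lemma Reg.mono_one {m : ℕ} {f : ℝ → E n → ℝ} (hf : Reg (m + 1) f) : Reg 1 f :=
  ⟨hf.1, hf.2.1, fun j => (hf.2.2 j).reg0⟩

lemma Reg.avg (ha : Continuous fun p : ℝ × Ω => a p.1 p.2)
    (hb : Continuous fun p : ℝ × Ω => b p.1 p.2) (hle : ∀ t ω, a t ω ≤ max t 0)
    {m : ℕ} : ∀ {f : ℝ → E n → ℝ}, Reg m f → Reg m (avg μ a b f) := by
  induction m with
  | zero => exact fun hf => Reg0.avg ha hb hle hf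
  | succ m ih =>
    refine fun {f} hf => ⟨hf.1.avg ha hb hle,
      fun t x => (hf.mono_one.hasFDerivAt_avg ha hb hle t x).differentiableAt, fun j => ?_⟩
    have : (fun t => pd (_root_.avg μ a b f t) j) = _root_.avg μ a b fun s => pd (f s) j := by
      ext t x; exact hf.mono_one.pd_avg ha hb hle t j x
    rw [this]
    exact ih (hf.2.2 j)

end Average

/-- The heat semigroup of `ν Δ` at time `r`. -/
def heat (ν r : ℝ) (f : E n → ℝ) (x : E n) : ℝ :=
  ∫ z, f (x + √(2 * ν * r) • z) ∂gauss n

/-- The Duhamel integral `∫₀ᵗ e^{(t - s) ν Δ} F(s) ds`, extended by zero to negative times. -/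
def duhamel (ν : ℝ) (F : ℝ → E n → ℝ) (t : ℝ) (x : E n) : ℝ :=
  ∫ s in (0 : ℝ)..max t 0, heat ν (max t 0 - s) (F s) x

lemma Reg.heat (ν : ℝ) {m : ℕ} {f : E n → ℝ} (hf : Reg m fun _ => f) :
    Reg m fun t => heat ν t f :=
  Reg.avg (μ := gauss n) (a := fun t _ => t) (b := fun t z => √(2 * ν * t) • z) (by fun_prop)
    (by fun_prop) (fun t _ => le_max_left t 0) hf

lemma Reg.pd_heat (ν : ℝ) {f : E n → ℝ} (hf : Reg 1 fun _ => f) (t : ℝ) (j : Fin n) (x : E n) :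
    pd (_root_.heat ν t f) j x = _root_.heat ν t (pd f j) x :=
  Reg.pd_avg (μ := gauss n) (a := fun t _ => t) (b := fun t z => √(2 * ν * t) • z) (by fun_prop)
    (by fun_prop) (fun t _ => le_max_left t 0) hf t j x

lemma abs_heat_le (ν r : ℝ) {f : E n → ℝ} {C : ℝ} (hC : ∀ x, |f x| ≤ C) (x : E n) :
    |heat ν r f x| ≤ C := by
  have h : ∀ z, ‖f (x + √(2 * ν * r) • z)‖ ≤ C := fun z => hC _
  simpa [heat] using norm_integral_le_of_norm_le_const (μ := gauss n) (.of_forall h)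

lemma heat_of_nonpos {ν r : ℝ} (hν : 0 < ν) (hr : r ≤ 0) (f : E n → ℝ) (x : E n) :
    heat ν r f x = f x := by
  have : √(2 * ν * r) = 0 := Real.sqrt_eq_zero_of_nonpos (by nlinarith)
  simp [heat, this]

/-- The probability space over which `duhamel` is an average. -/
def duhamelMeasure (n : ℕ) : Measure (ℝ × E n) := (volume.restrict (Ioc (0 : ℝ) 1)).prod (gauss n)

instance : IsFiniteMeasure (duhamelMeasure n) := by
  unfold duhamelMeasure; infer_instance

/-- The time at which the source is evaluated in the averaged form of `duhamel`. -/
def duhamelTime (t : ℝ) (ω : ℝ × E n) : ℝ := max t 0 - max t 0 * max ω.1 0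

/-- The spatial shift of the source in the averaged form of `duhamel`. -/
def duhamelShift (ν t : ℝ) (ω : ℝ × E n) : E n := √(2 * ν * (max t 0 * max ω.1 0)) • ω.2

lemma continuous_duhamelTime :
    Continuous fun p : ℝ × (ℝ × E n) => duhamelTime p.1 p.2 := by
  unfold duhamelTime; fun_prop

lemma continuous_duhamelShift (ν : ℝ) :
    Continuous fun p : ℝ × (ℝ × E n) => duhamelShift ν p.1 p.2 := by
  unfold duhamelShift; fun_prop

lemma duhamelTime_le (t : ℝ) (ω : ℝ × E n) : duhamelTime t ω ≤ max t 0 := by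
  unfold duhamelTime
  have : 0 ≤ max t 0 * max ω.1 0 := by positivity
  linarith

lemma duhamel_eq_avg (ν : ℝ) {F : ℝ → E n → ℝ} (hF : Reg0 F) (t : ℝ) (x : E n) :
    duhamel ν F t x
      = max t 0 * avg (duhamelMeasure n) duhamelTime (duhamelShift ν) F t x := by
  have hshift := hF.integrable_shift (μ := duhamelMeasure n) continuous_duhamelTime
    (continuous_duhamelShift ν) duhamelTime_le t x
  unfold avg
  rw [duhamelMeasure, integral_prod _ hshift, ← intervalIntegral.integral_of_le zero_le_one]
  have h := intervalIntegral.mul_integral_comp_sub_mul (a := 0) (b := 1)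
    (f := fun s => heat ν (max t 0 - s) (F s) x) (max t 0) (max t 0)
  simp only [mul_one, mul_zero, sub_self, sub_zero] at h
  rw [duhamel, ← h]
  congr 1
  refine intervalIntegral.integral_congr fun η hη => ?_
  rw [uIcc_of_le zero_le_one] at hη
  simp only [heat, duhamelTime, duhamelShift, max_eq_left hη.1, sub_sub_cancel]

lemma Reg.max_zero_mul {m : ℕ} : ∀ {f : ℝ → E n → ℝ}, Reg m f →
    Reg m fun t x => max t 0 * f t x := by
  have base : ∀ {f : ℝ → E n → ℝ}, Reg0 f → Reg0 fun t x => max t 0 * f t x := by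
    refine fun {f} hf => ⟨by have := hf.cont; fun_prop, fun T => ?_⟩
    obtain ⟨C, hC⟩ := hf.bdd T
    refine ⟨max T 0 * C, fun t ht x => ?_⟩
    rw [abs_mul, abs_of_nonneg (le_max_right t 0)]
    exact mul_le_mul (max_le_max ht le_rfl) (hC t ht x) (abs_nonneg _) (le_max_right _ _)
  induction m with
  | zero => exact base
  | succ m ih =>
    refine fun {f} hf => ⟨base hf.1, fun t => (hf.2.1 t).const_mul _, fun j => ?_⟩
    have : (fun t => pd (fun x => max t 0 * f t x) j) = fun t x => max t 0 * pd (f t) j x := by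
      ext t x; exact pd_const_mul (hf.2.1 t x) _ j
    rw [this]
    exact ih (hf.2.2 j)

lemma Reg.duhamel (ν : ℝ) {m : ℕ} {F : ℝ → E n → ℝ} (hF : Reg m F) : Reg m (duhamel ν F) := by
  have : _root_.duhamel ν F = fun t x => max t 0 *
      _root_.avg (duhamelMeasure n) duhamelTime (duhamelShift ν) F t x := by
    ext t x; exact duhamel_eq_avg ν hF.reg0 t x
  rw [this]
  exact (hF.avg continuous_duhamelTime (continuous_duhamelShift ν) duhamelTime_le).max_zero_mul

lemma Reg.pd_duhamel (ν : ℝ) {F : ℝ → E n → ℝ} (hF : Reg 1 F) (t : ℝ) (j : Fin n) (x : E n) :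
    pd (_root_.duhamel ν F t) j x = _root_.duhamel ν (fun s => pd (F s) j) t x := by
  have : _root_.duhamel ν F t = fun x => max t 0 *
      _root_.avg (duhamelMeasure n) duhamelTime (duhamelShift ν) F t x := by
    ext x; exact duhamel_eq_avg ν hF.reg0 t x
  rw [this, pd_const_mul
    ((hF.avg continuous_duhamelTime (continuous_duhamelShift ν) duhamelTime_le).2.1 t x),
    hF.pd_avg continuous_duhamelTime (continuous_duhamelShift ν) duhamelTime_le,
    duhamel_eq_avg ν (hF.2.2 j)]

end Averages

section Smoothing

open MeasureTheory Topology

variable {n : ℕ}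

/-- The first absolute moment of the standard Gaussian. -/
def gaussMoment (n : ℕ) : ℝ := ∫ z : E n, ‖z‖ ∂gauss n

lemma gaussMoment_nonneg : 0 ≤ gaussMoment n := integral_nonneg fun _ => norm_nonneg _

lemma Reg.exists_bound {f : E n → ℝ} {m : ℕ} (hf : Reg m fun _ => f) :
    ∃ C, ∀ x, |f x| ≤ C := by
  obtain ⟨C, hC⟩ := hf.reg0.bdd 0
  exact ⟨C, hC 0 le_rfl⟩

lemma Reg.continuous_fixed {f : ℝ → E n → ℝ} {m : ℕ} (hf : Reg m f) (t : ℝ) :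
    Continuous (f t) :=
  hf.reg0.cont.comp (by fun_prop : Continuous fun x : E n => (t, x))

lemma Reg.fixed {m : ℕ} : ∀ {f : ℝ → E n → ℝ}, Reg m f → ∀ t, Reg m fun _ => f t := by
  have base : ∀ {f : ℝ → E n → ℝ}, Reg0 f → ∀ t, Reg0 fun (_ : ℝ) => f t := by
    refine fun {f} hf t => ⟨(Reg.continuous_fixed (m := 0) hf t).comp continuous_snd, fun T => ?_⟩
    obtain ⟨C, hC⟩ := hf.bdd t
    exact ⟨C, fun _ _ x => hC t le_rfl x⟩
  induction m with
  | zero => exact base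
  | succ m ih => exact fun hf t => ⟨base hf.1 t, fun _ => hf.2.1 t, fun j => ih (hf.2.2 j) t⟩

lemma Reg.integral_coord_mul {f : E n → ℝ} (hf : Reg 1 fun _ => f) (j : Fin n) (σ : ℝ) (x : E n) :
    ∫ z, z j * f (x + σ • z) ∂gauss n = σ * ∫ z, pd f j (x + σ • z) ∂gauss n := by
  have hd : Differentiable ℝ f := hf.2.1 0
  obtain ⟨C, hC⟩ := hf.exists_bound
  obtain ⟨C', hC'⟩ := Reg.exists_bound (hf.2.2 j)
  have hc : Continuous (pd f j) := Reg.continuous_fixed (hf.2.2 j) 0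
  have hpd : ∀ z, pd (fun z => f (x + σ • z)) j z = σ * pd f j (x + σ • z) := fun z => by
    have h1 : HasFDerivAt (fun z : E n => x + σ • z) (σ • ContinuousLinearMap.id ℝ (E n)) z :=
      ((hasFDerivAt_id z).const_smul σ).const_add x
    have h2 := (hd (x + σ • z)).hasFDerivAt.comp z h1
    have h3 : fderiv ℝ (fun z => f (x + σ • z)) z = _ := h2.fderiv
    simp [pd, h3]
  have hpd' : pd (fun z => f (x + σ • z)) j = fun z => σ * pd f j (x + σ • z) := funext hpd
  rw [← integral_pd_gauss (g := fun z => f (x + σ • z)) (hd.comp (by fun_prop)) j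
    (by rw [hpd']; fun_prop) (C := C) (C' := |σ| * C') (fun z => hC _)
    (fun z => by
      rw [hpd, abs_mul]; exact mul_le_mul_of_nonneg_left (hC' _) (abs_nonneg _)),
    hpd', integral_const_mul]

lemma Reg.abs_heat_pd_le {ν r : ℝ} (hν : 0 < ν) (hr : 0 < r) {f : E n → ℝ}
    (hf : Reg 1 fun _ => f) {C : ℝ} (hC : ∀ x, |f x| ≤ C) (j : Fin n) (x : E n) :
    |_root_.heat ν r (pd f j) x| ≤ gaussMoment n / √(2 * ν * r) * C := by
  have hσ : 0 < √(2 * ν * r) := Real.sqrt_pos.2 (by positivity)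
  have h1 := hf.integral_coord_mul j (√(2 * ν * r)) x
  have h2 : |∫ z, z j * f (x + √(2 * ν * r) • z) ∂gauss n| ≤ gaussMoment n * C := by
    rw [gaussMoment, ← integral_mul_const, ← Real.norm_eq_abs]
    refine norm_integral_le_of_norm_le (integrable_norm_gauss.mul_const C)
      (.of_forall fun z => ?_)
    rw [Real.norm_eq_abs, abs_mul]
    exact mul_le_mul (abs_coord_le z j) (hC _) (abs_nonneg _) (norm_nonneg _)
  rw [h1, abs_mul, abs_of_pos hσ] at h2
  rw [div_mul_eq_mul_div, le_div_iff₀ hσ, mul_comm]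
  exact h2

lemma Reg.hasDerivAt_heat {ν t : ℝ} (hν : 0 < ν) (ht : 0 < t) {f : E n → ℝ}
    (hf : Reg 2 fun _ => f) (x : E n) :
    HasDerivAt (fun s => _root_.heat ν s f x)
      (ν * ∑ j, _root_.heat ν t (pd (pd f j) j) x) t := by
  have hd : Differentiable ℝ f := hf.2.1 0
  obtain ⟨C, hC⟩ := hf.exists_bound
  choose D hD using fun j => Reg.exists_bound (hf.2.2 j)
  have hc : ∀ j, Continuous (pd f j) := fun j => Reg.continuous_fixed (hf.2.2 j) 0
  have hD0 : 0 ≤ ∑ j, D j := Finset.sum_nonneg fun j _ => (abs_nonneg _).trans (hD j 0)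
  have hσ : ∀ s, 0 < s → HasDerivAt (fun s => √(2 * ν * s)) (ν / √(2 * ν * s)) s := fun s hs => by
    have h := ((hasDerivAt_id s).const_mul (2 * ν)).sqrt
      (show 2 * ν * s ≠ 0 by positivity)
    convert! h using 1
    simp; field_simp
  have key := hasDerivAt_integral_of_dominated_loc_of_deriv_le (μ := gauss n) (s := Ioi (t / 2))
    (x₀ := t) (F := fun s z => f (x + √(2 * ν * s) • z))
    (F' := fun s z => ∑ j, ν / √(2 * ν * s) * (z j * pd f j (x + √(2 * ν * s) • z)))
    (bound := fun z => ν / √(2 * ν * (t / 2)) * (‖z‖ * ∑ j, D j))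
    (Ioi_mem_nhds (by linarith))
    (.of_forall fun s => (hd.continuous.comp (by fun_prop)).aestronglyMeasurable)
    (integrable_of_bounded (hd.continuous.comp (by fun_prop)) fun z => hC _)
    (by
      refine Continuous.aestronglyMeasurable ?_
      fun_prop) ?_ ((integrable_norm_gauss.mul_const _).const_mul _) ?_
  · have h2 := key.2
    have : ∫ z, ∑ j, ν / √(2 * ν * t) * (z j * pd f j (x + √(2 * ν * t) • z)) ∂gauss n
        = ν * ∑ j, _root_.heat ν t (pd (pd f j) j) x := by
      rw [integral_finsetSum, Finset.mul_sum]
      · refine Finset.sum_congr rfl fun j _ => ?_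
        rw [integral_const_mul, Reg.integral_coord_mul (hf.2.2 j)]
        have : √(2 * ν * t) ≠ 0 := (Real.sqrt_pos.2 (by positivity)).ne'
        rw [_root_.heat]
        field_simp
      · intro j _
        exact (integrable_coord_mul_gauss (g := fun z => pd f j (x + √(2 * ν * t) • z))
          (by fun_prop) (fun z => hD j _) j).const_mul _
    rw [this] at h2
    exact h2
  · refine .of_forall fun z s hs => ?_
    have hs' : t / 2 < s := hs
    have h1 : ν / √(2 * ν * s) ≤ ν / √(2 * ν * (t / 2)) := by
      have : 0 < √(2 * ν * (t / 2)) := Real.sqrt_pos.2 (by positivity)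
      gcongr
    rw [← Finset.mul_sum, norm_mul, Real.norm_of_nonneg (by positivity)]
    refine mul_le_mul h1 ?_ (norm_nonneg _) (by positivity)
    rw [Finset.mul_sum]
    refine (norm_sum_le _ _).trans (Finset.sum_le_sum fun j _ => ?_)
    rw [norm_mul]
    exact mul_le_mul (abs_coord_le z j) (hD j _) (norm_nonneg _) (norm_nonneg _)
  · refine .of_forall fun z s hs => ?_
    have hs' : 0 < s := lt_trans (by positivity) (hs : t / 2 < s)
    have h1 : HasDerivAt (fun s => x + √(2 * ν * s) • z) ((ν / √(2 * ν * s)) • z) s :=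
      ((hσ s hs').smul_const z).const_add x
    have h2 := (hd (x + √(2 * ν * s) • z)).hasFDerivAt.comp_hasDerivAt s h1
    rw [fderiv_eq_sum_pd] at h2
    convert! h2 using 1
    rw [map_smul, smul_eq_mul, _root_.sum_apply, Finset.mul_sum]
    exact Finset.sum_congr rfl fun j _ => by simp [mul_comm]

lemma Reg.abs_heat_sub_heat_le {ν : ℝ} (hν : 0 < ν) {f : E n → ℝ} (hf : Reg 2 fun _ => f) {C : ℝ}
    (hC : ∀ j x, |pd (pd f j) j x| ≤ C) (x : E n) (r₁ r₂ : ℝ) :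
    |_root_.heat ν r₁ f x - _root_.heat ν r₂ f x| ≤ ν * (n * C) * |r₁ - r₂| := by
  have main : ∀ a b : ℝ, 0 ≤ a → a < b →
      |_root_.heat ν b f x - _root_.heat ν a f x| ≤ ν * (n * C) * |b - a| := by
    intro a b ha hab
    have hcont : Continuous fun r => _root_.heat ν r f x :=
      (hf.heat ν).reg0.cont.comp (by fun_prop : Continuous fun r : ℝ => (r, x))
    obtain ⟨c, hc, hc'⟩ := exists_hasDerivAt_eq_slope (fun r => _root_.heat ν r f x)
      (fun r => ν * ∑ j, _root_.heat ν r (pd (pd f j) j) x) hab hcont.continuousOn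
      fun r hr => hf.hasDerivAt_heat hν (ha.trans_lt hr.1) x
    rw [eq_div_iff (sub_pos.2 hab).ne'] at hc'
    rw [← hc', abs_mul, abs_mul, abs_of_pos hν]
    refine mul_le_mul_of_nonneg_right (mul_le_mul_of_nonneg_left ?_ hν.le) (abs_nonneg _)
    refine (Finset.abs_sum_le_sum_abs _ _).trans ?_
    refine (Finset.sum_le_sum fun j _ => abs_heat_le ν c (hC j) x).trans (by simp)
  have main' : ∀ a b : ℝ, 0 ≤ a → 0 ≤ b →
      |_root_.heat ν b f x - _root_.heat ν a f x| ≤ ν * (n * C) * |b - a| := by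
    intro a b ha hb
    rcases lt_trichotomy a b with h | h | h
    · exact main a b ha h
    · simp [h]
    · rw [abs_sub_comm, abs_sub_comm b]; exact main b a hb h
  have hmax : ∀ r, _root_.heat ν r f x = _root_.heat ν (max r 0) f x := fun r => by
    rcases le_total r 0 with h | h
    · rw [max_eq_right h, heat_of_nonpos hν h, heat_of_nonpos hν le_rfl]
    · rw [max_eq_left h]
  rw [hmax r₁, hmax r₂]
  refine (main' _ _ (le_max_right _ _) (le_max_right _ _)).trans ?_
  rcases isEmpty_or_nonempty (Fin n) with h | ⟨⟨j⟩⟩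
  · have : n = 0 := (Fintype.card_fin n).symm.trans (Fintype.card_eq_zero_iff.2 h)
    subst this; simp
  · have hC0 : 0 ≤ C := (abs_nonneg _).trans (hC j 0)
    refine mul_le_mul_of_nonneg_left ?_ (by positivity)
    exact abs_max_sub_max_le_abs r₁ r₂ 0

end Smoothing

section Duhamel

open MeasureTheory Topology

variable {n : ℕ}

lemma Reg0.continuous_heat_sub {F : ℝ → E n → ℝ} (hF : Reg0 F) (ν t : ℝ) (x : E n) :
    Continuous fun s => heat ν (t - s) (F s) x :=
  (Reg0.avg (μ := gauss n) (a := fun s _ => s) (b := fun s z => √(2 * ν * (t - s)) • z)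
    (by fun_prop) (by fun_prop) (fun t _ => le_max_left t 0) hF).cont.comp
    (by fun_prop : Continuous fun s : ℝ => (s, x))

lemma Reg.hasDerivAt_duhamel {ν t : ℝ} (hν : 0 < ν) (ht : 0 < t) {F : ℝ → E n → ℝ}
    (hF : Reg 2 F) (x : E n) :
    HasDerivAt (fun t => _root_.duhamel ν F t x)
      (F t x + ν * ∑ j, _root_.duhamel ν (fun s => pd (pd (F s) j) j) t x) t := by
  have hFc : Continuous fun s => F s x :=
    hF.1.cont.comp (by fun_prop : Continuous fun s : ℝ => (s, x))
  have hRR : ∀ j, Reg0 fun s => pd (pd (F s) j) j := fun j => (hF.2.2 j).2.2 j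
  choose D hD using fun j => (hRR j).bdd (t + 1)
  have hD0 : ∀ j, 0 ≤ D j := fun j => (abs_nonneg _).trans (hD j t (by linarith) 0)
  have hcont : ∀ t', Continuous fun s => _root_.heat ν (t' - s) (F s) x :=
    fun t' => hF.1.continuous_heat_sub ν t' x
  have hcont2 : Continuous fun s => ν * ∑ j, _root_.heat ν (t - s) (pd (pd (F s) j) j) x :=
    continuous_const.mul (continuous_finsetSum _ fun j _ => (hRR j).continuous_heat_sub ν t x)
  have key := (intervalIntegral.hasDerivAt_integral_of_dominated_loc_of_lip (𝕜 := ℝ)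
    (μ := volume) (a := 0) (b := t + 1) (s := univ) (x₀ := t)
    (bound := fun _ => ν * (n * ∑ j, D j))
    (F := fun t' s => _root_.heat ν (t' - s) (F s) x)
    (F' := indicator {s | s ≤ t} fun s => ν * ∑ j, _root_.heat ν (t - s) (pd (pd (F s) j) j) x)
    univ_mem (.of_forall fun t' => (hcont t').aestronglyMeasurable)
    ((hcont t).intervalIntegrable _ _)
    (hcont2.aestronglyMeasurable.indicator measurableSet_Iic) (.of_forall fun s hs => ?_)
    (by simp) ?_).2
  · rw [intervalIntegral.integral_indicator ⟨ht.le, by linarith⟩] at key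
    have key2 := key.sub ((intervalIntegral.integral_hasDerivAt_right (a := t + 1) (b := t)
      (hFc.intervalIntegrable _ _) (hFc.stronglyMeasurableAtFilter _ _)
      hFc.continuousAt).neg)
    have hval : (∫ s in (0 : ℝ)..t, ν * ∑ j, _root_.heat ν (t - s) (pd (pd (F s) j) j) x)
        - -F t x = F t x + ν * ∑ j, _root_.duhamel ν (fun s => pd (pd (F s) j) j) t x := by
      rw [intervalIntegral.integral_const_mul, intervalIntegral.integral_finsetSum
        fun j _ => ((hRR j).continuous_heat_sub ν t x).intervalIntegrable _ _]
      simp only [_root_.duhamel, max_eq_left ht.le]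
      ring
    rw [hval] at key2
    refine key2.congr_of_eventuallyEq ?_
    filter_upwards [lt_mem_nhds ht, gt_mem_nhds (show t < t + 1 by linarith)] with t' h1 h2
    have h3 : ∫ s in t'..(t + 1), _root_.heat ν (t' - s) (F s) x = ∫ s in t'..(t + 1), F s x := by
      refine intervalIntegral.integral_congr fun s hs => ?_
      rw [uIcc_of_le h2.le] at hs
      exact heat_of_nonpos hν (by linarith [hs.1]) _ _
    have h4 := intervalIntegral.integral_add_adjacent_intervals
      ((hcont t').intervalIntegrable (μ := volume) 0 t') ((hcont t').intervalIntegrable t' (t + 1))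
    simp only [_root_.duhamel, max_eq_left h1.le, Pi.sub_apply, Pi.neg_apply]
    rw [intervalIntegral.integral_symm t' (t + 1), ← h3, ← h4]
    ring
  · rw [uIoc_of_le (by linarith)] at hs
    refine LipschitzOnWith.of_dist_le_mul fun r₁ _ r₂ _ => ?_
    have h1 := Reg.abs_heat_sub_heat_le hν (hF.fixed s) (C := ∑ j, D j) (fun j y =>
      (hD j s hs.2 y).trans (Finset.single_le_sum (fun k _ => hD0 k) (Finset.mem_univ j))) x
      (r₁ - s) (r₂ - s)
    have h0 : 0 ≤ ν * (n * ∑ j, D j) :=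
      mul_nonneg hν.le (mul_nonneg (Nat.cast_nonneg _) (Finset.sum_nonneg fun j _ => hD0 j))
    rw [Real.coe_nnabs, abs_of_nonneg h0, Real.dist_eq, Real.dist_eq]
    simpa using h1
  · filter_upwards [compl_mem_ae_iff.2 (measure_singleton (μ := volume) t)] with s hs _
    have hs' : s ≠ t := hs
    rcases lt_or_gt_of_ne hs' with h | h
    · rw [indicator_of_mem (show s ∈ {s | s ≤ t} from h.le)]
      have := Reg.hasDerivAt_heat hν (sub_pos.2 h) (hF.fixed s) x
      exact this.comp_sub_const t s
    · rw [indicator_of_notMem (show s ∉ {s | s ≤ t} from not_le.2 h)]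
      refine (hasDerivAt_const t (F s x)).congr_of_eventuallyEq ?_
      filter_upwards [gt_mem_nhds h] with t' ht'
      exact heat_of_nonpos hν (by linarith) _ _

lemma duhamel_of_nonpos {ν t : ℝ} (ht : t ≤ 0) (F : ℝ → E n → ℝ) (x : E n) :
    duhamel ν F t x = 0 := by
  simp [duhamel, max_eq_right ht]

lemma duhamel_sub {ν : ℝ} {F G : ℝ → E n → ℝ} (hF : Reg0 F) (hG : Reg0 G) (t : ℝ) (x : E n) :
    duhamel ν (fun s y => F s y - G s y) t x = duhamel ν F t x - duhamel ν G t x := by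
  unfold duhamel
  rw [← intervalIntegral.integral_sub ((hF.continuous_heat_sub ν _ x).intervalIntegrable _ _)
    ((hG.continuous_heat_sub ν _ x).intervalIntegrable _ _)]
  refine intervalIntegral.integral_congr fun s _ => ?_
  have hi : ∀ {H : ℝ → E n → ℝ}, Reg0 H →
      Integrable (fun z => H s (x + √(2 * ν * (max t 0 - s)) • z)) (gauss n) := fun {H} hH => by
    obtain ⟨C, hC⟩ := hH.bdd s
    have := Reg.continuous_fixed (m := 0) hH s
    exact integrable_of_bounded (by fun_prop) fun z => hC s le_rfl _
  exact integral_sub (hi hF) (hi hG)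

lemma abs_duhamel_le {ν t lam B : ℝ} (ht : 0 ≤ t) (hlam : 0 < lam) {F : ℝ → E n → ℝ}
    (hB : ∀ s, 0 ≤ s → s ≤ t → ∀ x, |F s x| ≤ B * Real.exp (lam * s)) (x : E n) :
    |duhamel ν F t x| ≤ 1 / lam * (B * Real.exp (lam * t)) := by
  have hB0 : 0 ≤ B := by
    have := (abs_nonneg _).trans (hB 0 le_rfl ht 0)
    simpa using this
  rw [duhamel, max_eq_left ht, ← Real.norm_eq_abs]
  refine (intervalIntegral.norm_integral_le_of_norm_le ht (.of_forall fun s hs =>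
    abs_heat_le ν _ (hB s hs.1.le hs.2) x) (by
      exact (by fun_prop : Continuous fun s => B * Real.exp (lam * s)).intervalIntegrable _ _)).trans ?_
  rw [intervalIntegral.integral_const_mul, intervalIntegral.integral_comp_mul_left _ hlam.ne',
    integral_exp, smul_eq_mul]
  have : lam⁻¹ * (Real.exp (lam * t) - Real.exp (lam * 0)) ≤ lam⁻¹ * Real.exp (lam * t) := by
    gcongr; linarith [Real.exp_pos (lam * 0)]
  calc _ ≤ B * (lam⁻¹ * Real.exp (lam * t)) := by gcongr
    _ = _ := by ring

/-- The gain from smoothing: a derivative under the Duhamel integral costs this factor in the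
norm weighted by `exp (lam * t)`. -/
def smoothing (n : ℕ) (ν lam : ℝ) : ℝ :=
  gaussMoment n / √(2 * ν) * ((1 / lam) ^ (1 / 2 : ℝ) * Real.Gamma (1 / 2))

lemma tendsto_smoothing (n : ℕ) (ν : ℝ) : Tendsto (smoothing n ν) atTop (𝓝 0) := by
  have h1 : Tendsto (fun lam : ℝ => (1 / lam) ^ (1 / 2 : ℝ)) atTop (𝓝 0) := by
    have := (tendsto_inv_atTop_zero (𝕜 := ℝ)).rpow_const (p := 1 / 2) (.inr (by norm_num))
    simpa using this
  have := (h1.mul_const (Real.Gamma (1 / 2))).const_mul (gaussMoment n / √(2 * ν))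
  rw [zero_mul, mul_zero] at this
  exact this

lemma Reg.abs_duhamel_pd_le {ν t lam B : ℝ} (hν : 0 < ν) (ht : 0 ≤ t) (hlam : 0 < lam)
    {F : ℝ → E n → ℝ} (hF : Reg 1 F)
    (hB : ∀ s, 0 ≤ s → s ≤ t → ∀ x, |F s x| ≤ B * Real.exp (lam * s)) (j : Fin n) (x : E n) :
    |_root_.duhamel ν (fun s => pd (F s) j) t x| ≤ smoothing n ν lam * (B * Real.exp (lam * t)) := by
  have hB0 : 0 ≤ B := by
    have := (abs_nonneg _).trans (hB 0 le_rfl ht 0)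
    simpa using this
  set w : ℝ → ℝ := fun r => r ^ ((1 / 2 : ℝ) - 1) * Real.exp (-(lam * r)) with hw
  have hwI := Real.integral_rpow_mul_exp_neg_mul_Ioi (a := 1 / 2) (by norm_num) hlam
  have hwint : IntegrableOn w (Ioi 0) := by
    refine Integrable.of_integral_ne_zero ?_
    rw [hw, hwI]
    have := Real.Gamma_pos_of_pos (show (0 : ℝ) < 1 / 2 by norm_num)
    positivity
  have hwii : IntervalIntegrable w volume 0 t :=
    (intervalIntegrable_iff_integrableOn_Ioc_of_le ht).2 (hwint.mono_set Ioc_subset_Ioi_self)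
  have hwle : ∫ r in (0 : ℝ)..t, w r ≤ (1 / lam) ^ (1 / 2 : ℝ) * Real.Gamma (1 / 2) := by
    rw [← hwI, intervalIntegral.integral_of_le ht]
    refine setIntegral_mono_set hwint ?_ Ioc_subset_Ioi_self.eventuallyLE
    filter_upwards [self_mem_ae_restrict measurableSet_Ioi] with r hr
    have hr' : (0 : ℝ) < r := hr
    simp only [hw, Pi.zero_apply]; positivity
  set A := gaussMoment n / √(2 * ν) * (B * Real.exp (lam * t)) with hA
  have hA0 : 0 ≤ A := by have := gaussMoment_nonneg (n := n); positivity
  have hii : IntervalIntegrable (fun s => A * w (t - s)) volume 0 t := by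
    have := (hwii.comp_sub_left t).const_mul A
    simpa using this.symm
  rw [_root_.duhamel, max_eq_left ht, ← Real.norm_eq_abs]
  refine (intervalIntegral.norm_integral_le_of_norm_le ht ?_ hii).trans ?_
  · filter_upwards [compl_mem_ae_iff.2 (measure_singleton (μ := volume) t)] with s hs hs2
    have hst : s < t := lt_of_le_of_ne hs2.2 hs
    have h1 := Reg.abs_heat_pd_le hν (sub_pos.2 hst) (hF.fixed s) (hB s hs2.1.le hs2.2) j x
    refine h1.trans (le_of_eq ?_)
    have h2 : (t - s) ^ ((1 / 2 : ℝ) - 1) = (√(t - s))⁻¹ := by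
      rw [Real.sqrt_eq_rpow, ← Real.rpow_neg (sub_pos.2 hst).le]; norm_num
    have h3 : Real.exp (lam * s) = Real.exp (lam * t) * Real.exp (-(lam * (t - s))) := by
      rw [← Real.exp_add]; ring_nf
    rw [hw, hA, Real.sqrt_mul (by positivity)]
    simp only [h2, h3]
    have : 0 < √(t - s) := Real.sqrt_pos.2 (sub_pos.2 hst)
    field_simp
  · rw [intervalIntegral.integral_const_mul, intervalIntegral.integral_comp_sub_left (fun s => w s),
      sub_self, sub_zero]
    refine (mul_le_mul_of_nonneg_left hwle hA0).trans (le_of_eq ?_)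
    rw [hA, smoothing]; ring

end Duhamel

section Picard

open MeasureTheory Topology

variable {n : ℕ}

/-- Smooth functions which are bounded by `L` together with their derivative, and which are
`L`-Lipschitz together with their derivative. -/
structure Cutoff (χ : ℝ → ℝ) (L : ℝ) : Prop where
  smooth : ContDiff ℝ (⊤ : ℕ∞) χ
  abs_le : ∀ s, |χ s| ≤ L
  abs_deriv_le : ∀ s, |deriv χ s| ≤ L
  lip : ∀ s s', |χ s - χ s'| ≤ L * |s - s'|
  lip_deriv : ∀ s s', |deriv χ s - deriv χ s'| ≤ L * |s - s'|

lemma Cutoff.nonneg {χ : ℝ → ℝ} {L : ℝ} (hχ : Cutoff χ L) : 0 ≤ L :=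
  (abs_nonneg _).trans (hχ.abs_le 0)

/-- The convection term, with convection velocity truncated by `χ`. -/
def flux (χ : ℝ → ℝ) (v : Fin n → ℝ → E n → ℝ) (i : Fin n) (t : ℝ) (x : E n) : ℝ :=
  ∑ j, χ (v j t x) * pd (v i t) j x

/-- One step of the Picard iteration for the truncated Burgers system. -/
def picard (ν : ℝ) (χ : ℝ → ℝ) (h : Fin n → E n → ℝ) (v : Fin n → ℝ → E n → ℝ) (i : Fin n)
    (t : ℝ) (x : E n) : ℝ :=
  heat ν t (h i) x - duhamel ν (flux χ v i) t x

variable {ν L : ℝ} {χ : ℝ → ℝ} {h : Fin n → E n → ℝ} {u v : Fin n → ℝ → E n → ℝ}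

lemma Reg.flux {m : ℕ} (hχ : Cutoff χ L) (hv : ∀ i, Reg (m + 1) (v i)) (i : Fin n) :
    Reg m (flux χ v i) :=
  Reg.sum _ fun j => (((hv j).of_succ).comp hχ.smooth).mul ((hv i).2.2 j)

lemma pd_flux (hχ : Cutoff χ L) (hv : ∀ i, Reg 2 (v i)) (i : Fin n) (t : ℝ) (c : Fin n) (x : E n) :
    pd (flux χ v i t) c x = ∑ j, (deriv χ (v j t x) * pd (v j t) c x * pd (v i t) j x
      + χ (v j t x) * pd (pd (v i t) j) c x) := by
  have hd : Differentiable ℝ χ := hχ.smooth.differentiable (by simp)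
  have h1 : ∀ j, DifferentiableAt ℝ (fun y => χ (v j t y)) x :=
    fun j => (hd _).comp x ((hv j).2.1 t x)
  have h2 : ∀ j, DifferentiableAt ℝ (pd (v i t) j) x := fun j => ((hv i).2.2 j).2.1 t x
  have : flux χ v i t = fun y => ∑ j, χ (v j t y) * pd (v i t) j y := rfl
  rw [this, pd_sum _ (f := fun j y => χ (v j t y) * pd (v i t) j y) fun j _ => (h1 j).mul (h2 j)]
  refine Finset.sum_congr rfl fun j _ => ?_
  rw [pd_mul (h1 j) (h2 j), pd_comp hd ((hv j).2.1 t x)]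

lemma Reg.picard (hχ : Cutoff χ L) {m : ℕ} (hh : ∀ i, Reg m fun _ => h i)
    (hv : ∀ i, Reg (m + 1) (v i)) (i : Fin n) : Reg m (picard ν χ h v i) :=
  ((hh i).heat ν).sub ((Reg.flux hχ hv i).duhamel ν)

lemma pd_picard (hχ : Cutoff χ L) (hh : ∀ i, Reg 1 fun _ => h i) (hv : ∀ i, Reg 2 (v i))
    (i : Fin n) (t : ℝ) (j : Fin n) : pd (picard ν χ h v i t) j =
      fun x => heat ν t (pd (h i) j) x - duhamel ν (fun s => pd (flux χ v i s) j) t x := by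
  ext x
  have h1 := (hh i).heat ν
  have h2 := (Reg.flux hχ hv i).duhamel ν
  have : picard ν χ h v i t = fun x => heat ν t (h i) x - duhamel ν (flux χ v i) t x := rfl
  rw [this, pd_sub (h1.2.1 t x) (h2.2.1 t x), (hh i).pd_heat, (Reg.flux hχ hv i).pd_duhamel]

lemma pd_pd_picard (hχ : Cutoff χ L) (hh : ∀ i, Reg 2 fun _ => h i) (hv : ∀ i, Reg 3 (v i))
    (i : Fin n) (t : ℝ) (j k : Fin n) : pd (pd (picard ν χ h v i t) j) k =
      fun x => heat ν t (pd (pd (h i) j) k) x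
        - duhamel ν (fun s => pd (pd (flux χ v i s) j) k) t x := by
  have hf := Reg.flux hχ hv i
  rw [pd_picard hχ (fun i => (hh i).mono_one) (fun i => (hv i).of_succ)]
  ext x
  have h1 := ((hh i).2.2 j).heat ν
  have h2 := (hf.2.2 j).duhamel ν
  rw [pd_sub (h1.2.1 t x) (h2.2.1 t x), Reg.pd_heat ν ((hh i).2.2 j),
    Reg.pd_duhamel ν (hf.2.2 j)]

lemma hasDerivAt_picard (hν : 0 < ν) (hχ : Cutoff χ L) (hh : ∀ i, Reg 2 fun _ => h i)
    (hv : ∀ i, Reg 3 (v i)) (i : Fin n) {t : ℝ} (ht : 0 < t) (x : E n) :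
    HasDerivAt (fun s => picard ν χ h v i s x)
      (ν * ∑ j, pd (pd (picard ν χ h v i t) j) j x - flux χ v i t x) t := by
  have h1 := ((hh i).hasDerivAt_heat hν ht x).sub
    ((Reg.flux hχ hv i).hasDerivAt_duhamel hν ht x)
  convert! h1 using 1
  simp only [pd_pd_picard hχ hh hv, Finset.sum_sub_distrib]
  ring

lemma picard_of_nonpos (hν : 0 < ν) (i : Fin n) {t : ℝ} (ht : t ≤ 0) (x : E n) :
    picard ν χ h v i t x = h i x := by
  simp [picard, heat_of_nonpos hν ht, duhamel_of_nonpos ht]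

lemma abs_sum_le_card_mul {f : Fin n → ℝ} {C : ℝ} (hf : ∀ j, |f j| ≤ C) : |∑ j, f j| ≤ n * C :=
  (Finset.abs_sum_le_sum_abs _ _).trans
    ((Finset.sum_le_sum fun j _ => hf j).trans (by simp))

lemma abs_flux_le (hχ : Cutoff χ L) {t C : ℝ} {x : E n} {i : Fin n}
    (hC : ∀ j, |pd (v i t) j x| ≤ C) : |flux χ v i t x| ≤ n * (L * C) :=
  abs_sum_le_card_mul fun j => by
    rw [abs_mul]
    exact mul_le_mul (hχ.abs_le _) (hC j) (abs_nonneg _) hχ.nonneg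

lemma abs_pd_flux_le (hχ : Cutoff χ L) (hv : ∀ i, Reg 2 (v i)) {t G C : ℝ} {x : E n}
    (hG : ∀ i j, |pd (v i t) j x| ≤ G) (hC : ∀ i j k, |pd (pd (v i t) j) k x| ≤ C) (i c : Fin n) :
    |pd (flux χ v i t) c x| ≤ n * (L * (G ^ 2 + C)) := by
  rw [pd_flux hχ hv]
  refine abs_sum_le_card_mul fun j => (abs_add_le _ _).trans ?_
  have hG0 : 0 ≤ G := (abs_nonneg _).trans (hG i j)
  have hL := hχ.nonneg
  rw [abs_mul, abs_mul, abs_mul]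
  calc _ ≤ L * G * G + L * C := by
        gcongr
        · exact hχ.abs_deriv_le _
        · exact hG _ _
        · exact hG _ _
        · exact hχ.abs_le _
        · exact hC _ _ _
    _ = _ := by ring

lemma abs_flux_sub_le (hχ : Cutoff χ L) {t G d : ℝ} {x : E n} (hG0 : 0 ≤ G)
    (hG : ∀ i j, |pd (u i t) j x| ≤ G) (hd : ∀ i, |u i t x - v i t x| ≤ d)
    (hd1 : ∀ i j, |pd (u i t) j x - pd (v i t) j x| ≤ d) (i : Fin n) :
    |flux χ u i t x - flux χ v i t x| ≤ n * (L * ((G ^ 2 + 3 * G + 1) * d)) := by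
  rw [flux, flux, ← Finset.sum_sub_distrib]
  refine abs_sum_le_card_mul fun j => ?_
  have hL := hχ.nonneg
  have hd0 : 0 ≤ d := (abs_nonneg _).trans (hd i)
  have : χ (u j t x) * pd (u i t) j x - χ (v j t x) * pd (v i t) j x
      = (χ (u j t x) - χ (v j t x)) * pd (u i t) j x
        + χ (v j t x) * (pd (u i t) j x - pd (v i t) j x) := by ring
  rw [this]
  refine (abs_add_le _ _).trans ?_
  rw [abs_mul, abs_mul]
  calc _ ≤ L * d * G + L * d := by
        gcongr
        · exact (hχ.lip _ _).trans (by gcongr; exact hd j)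
        · exact hG _ _
        · exact hχ.abs_le _
        · exact hd1 _ _
    _ ≤ _ := by
        have : 0 ≤ L * d * (G ^ 2 + 2 * G) := by positivity
        linarith

lemma abs_pd_flux_sub_le (hχ : Cutoff χ L) (hu : ∀ i, Reg 2 (u i)) (hv : ∀ i, Reg 2 (v i))
    {t G d : ℝ} {x : E n} (hG0 : 0 ≤ G)
    (hG : ∀ i j, |pd (u i t) j x| ≤ G) (hG' : ∀ i j, |pd (v i t) j x| ≤ G)
    (hG2 : ∀ i j k, |pd (pd (u i t) j) k x| ≤ G) (hd : ∀ i, |u i t x - v i t x| ≤ d)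
    (hd1 : ∀ i j, |pd (u i t) j x - pd (v i t) j x| ≤ d)
    (hd2 : ∀ i j k, |pd (pd (u i t) j) k x - pd (pd (v i t) j) k x| ≤ d) (i c : Fin n) :
    |pd (flux χ u i t) c x - pd (flux χ v i t) c x| ≤ n * (L * ((G ^ 2 + 3 * G + 1) * d)) := by
  rw [pd_flux hχ hu, pd_flux hχ hv, ← Finset.sum_sub_distrib]
  refine abs_sum_le_card_mul fun j => ?_
  have hL := hχ.nonneg
  have hd0 : 0 ≤ d := (abs_nonneg _).trans (hd i)
  have : deriv χ (u j t x) * pd (u j t) c x * pd (u i t) j x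
        + χ (u j t x) * pd (pd (u i t) j) c x
      - (deriv χ (v j t x) * pd (v j t) c x * pd (v i t) j x
        + χ (v j t x) * pd (pd (v i t) j) c x)
      = (deriv χ (u j t x) - deriv χ (v j t x)) * pd (u j t) c x * pd (u i t) j x
        + deriv χ (v j t x) * (pd (u j t) c x - pd (v j t) c x) * pd (u i t) j x
        + deriv χ (v j t x) * pd (v j t) c x * (pd (u i t) j x - pd (v i t) j x)
        + (χ (u j t x) - χ (v j t x)) * pd (pd (u i t) j) c x
        + χ (v j t x) * (pd (pd (u i t) j) c x - pd (pd (v i t) j) c x) := by ring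
  rw [this]
  have e1 : |(deriv χ (u j t x) - deriv χ (v j t x)) * pd (u j t) c x * pd (u i t) j x|
      ≤ L * d * G * G := by
    rw [abs_mul, abs_mul]
    gcongr
    · exact (hχ.lip_deriv _ _).trans (by gcongr; exact hd j)
    · exact hG _ _
    · exact hG _ _
  have e2 : |deriv χ (v j t x) * (pd (u j t) c x - pd (v j t) c x) * pd (u i t) j x|
      ≤ L * d * G := by
    rw [abs_mul, abs_mul]
    gcongr
    · exact hχ.abs_deriv_le _
    · exact hd1 _ _
    · exact hG _ _
  have e3 : |deriv χ (v j t x) * pd (v j t) c x * (pd (u i t) j x - pd (v i t) j x)|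
      ≤ L * G * d := by
    rw [abs_mul, abs_mul]
    gcongr
    · exact hχ.abs_deriv_le _
    · exact hG' _ _
    · exact hd1 _ _
  have e4 : |(χ (u j t x) - χ (v j t x)) * pd (pd (u i t) j) c x| ≤ L * d * G := by
    rw [abs_mul]
    gcongr
    · exact (hχ.lip _ _).trans (by gcongr; exact hd j)
    · exact hG2 _ _ _
  have e5 : |χ (v j t x) * (pd (pd (u i t) j) c x - pd (pd (v i t) j) c x)| ≤ L * d := by
    rw [abs_mul]
    gcongr
    · exact hχ.abs_le _
    · exact hd2 _ _ _
  refine (abs_add_le _ _).trans ?_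
  refine (add_le_add_left ((abs_add_le _ _).trans (add_le_add_left ((abs_add_le _ _).trans
    (add_le_add_left (abs_add_le _ _) _)) _)) _).trans ?_
  linarith

end Picard

section DerivativeBounds

open MeasureTheory Topology

variable {n : ℕ}
variable {ν L : ℝ} {χ : ℝ → ℝ} {h : Fin n → E n → ℝ} {u v : Fin n → ℝ → E n → ℝ}

/-- Bounds on the first and second derivatives which are propagated by the Picard iteration. -/
structure DerivBound (K H : ℝ) (v : Fin n → ℝ → E n → ℝ) : Prop where
  first : ∀ i t, 0 ≤ t → ∀ j x, |pd (v i t) j x| ≤ 2 * H * Real.exp (K * t)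
  second : ∀ i t, 0 ≤ t → ∀ j k x,
    |pd (pd (v i t) j) k x| ≤ (4 * H ^ 2 + 2 * H) * Real.exp (2 * K * t)

lemma DerivBound.picard {K H : ℝ} (hν : 0 < ν) (hχ : Cutoff χ L) (hh : ∀ i, Reg 2 fun _ => h i)
    (hv : ∀ i, Reg 3 (v i)) (hK : 0 < K) (hK1 : smoothing n ν K * (n * L) ≤ 1 / 2)
    (hK2 : smoothing n ν (2 * K) * (n * L) ≤ 1 / 2)
    (hH0 : 0 ≤ H) (hH1 : ∀ i j x, |pd (h i) j x| ≤ H) (hH2 : ∀ i j k x, |pd (pd (h i) j) k x| ≤ H)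
    (hb : DerivBound K H v) : DerivBound K H (picard ν χ h v) := by
  have hf := fun i => Reg.flux hχ hv i
  refine ⟨fun i t ht j x => ?_, fun i t ht j k x => ?_⟩
  · rw [pd_picard hχ (fun i => (hh i).mono_one) (fun i => (hv i).of_succ)]
    refine (abs_sub _ _).trans ?_
    have h1 := abs_heat_le ν t (hH1 i j) x
    have h2 := (hf i).mono_one.abs_duhamel_pd_le hν ht hK (B := n * (L * (2 * H)))
      (fun s hs _ y => (abs_flux_le hχ fun j => hb.first i s hs j y).trans (by
        apply le_of_eq; ring)) j x
    have h3 : 1 ≤ Real.exp (K * t) := Real.one_le_exp (by positivity)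
    have h4 : smoothing n ν K * (n * (L * (2 * H)) * Real.exp (K * t))
        = smoothing n ν K * (n * L) * (2 * H * Real.exp (K * t)) := by ring
    rw [h4] at h2
    have h5 := mul_le_mul_of_nonneg_right hK1 (show 0 ≤ 2 * H * Real.exp (K * t) by positivity)
    nlinarith
  · rw [pd_pd_picard hχ hh hv]
    refine (abs_sub _ _).trans ?_
    have h1 := abs_heat_le ν t (hH2 i j k) x
    have h2 := Reg.abs_duhamel_pd_le hν ht (show 0 < 2 * K by positivity)
      (F := fun s => pd (flux χ v i s) j) ((hf i).2.2 j) (B := n * (L * (8 * H ^ 2 + 2 * H)))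
      (fun s hs _ y => (abs_pd_flux_le hχ (fun i => (hv i).of_succ)
        (fun i j => hb.first i s hs j y) (fun i j k => hb.second i s hs j k y) i j).trans (by
        apply le_of_eq
        rw [show 2 * K * s = K * s + K * s by ring, Real.exp_add]; ring)) k x
    have h3 : 1 ≤ Real.exp (2 * K * t) := Real.one_le_exp (by positivity)
    have h4 : smoothing n ν (2 * K) * (n * (L * (8 * H ^ 2 + 2 * H)) * Real.exp (2 * K * t))
        = smoothing n ν (2 * K) * (n * L) * ((8 * H ^ 2 + 2 * H) * Real.exp (2 * K * t)) := by ring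
    rw [h4] at h2
    have h5 := mul_le_mul_of_nonneg_right hK2
      (show 0 ≤ (8 * H ^ 2 + 2 * H) * Real.exp (2 * K * t) by positivity)
    nlinarith

/-- Closeness in `C²`, uniformly on `[0, T] × ℝⁿ`, with exponential weight in time. -/
structure C2Close (T lam a : ℝ) (u v : Fin n → ℝ → E n → ℝ) : Prop where
  zeroth : ∀ i t, 0 ≤ t → t ≤ T → ∀ x, |u i t x - v i t x| ≤ a * Real.exp (lam * t)
  first : ∀ i t, 0 ≤ t → t ≤ T → ∀ j x,
    |pd (u i t) j x - pd (v i t) j x| ≤ a * Real.exp (lam * t)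
  second : ∀ i t, 0 ≤ t → t ≤ T → ∀ j k x,
    |pd (pd (u i t) j) k x - pd (pd (v i t) j) k x| ≤ a * Real.exp (lam * t)

lemma C2Close.picard {T lam a G : ℝ} (hν : 0 < ν) (hχ : Cutoff χ L) (hh : ∀ i, Reg 2 fun _ => h i)
    (hu : ∀ i, Reg 3 (u i)) (hv : ∀ i, Reg 3 (v i)) (hlam : 0 < lam) (hG0 : 0 ≤ G) (ha : 0 ≤ a)
    (h1 : 1 / lam * (n * (L * (G ^ 2 + 3 * G + 1))) ≤ 1 / 2)
    (h2 : smoothing n ν lam * (n * (L * (G ^ 2 + 3 * G + 1))) ≤ 1 / 2)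
    (hG : ∀ i t, 0 ≤ t → t ≤ T → ∀ j x, |pd (u i t) j x| ≤ G)
    (hG' : ∀ i t, 0 ≤ t → t ≤ T → ∀ j x, |pd (v i t) j x| ≤ G)
    (hG2 : ∀ i t, 0 ≤ t → t ≤ T → ∀ j k x, |pd (pd (u i t) j) k x| ≤ G)
    (huv : C2Close T lam a u v) :
    C2Close T lam (a * (1 / 2)) (picard ν χ h u) (picard ν χ h v) := by
  set Q := G ^ 2 + 3 * G + 1 with hQ
  have hfu := fun i => Reg.flux hχ hu i
  have hfv := fun i => Reg.flux hχ hv i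
  have hfd := fun i => (hfu i).sub (hfv i)
  have hflux : ∀ i s, 0 ≤ s → s ≤ T → ∀ y, |flux χ u i s y - flux χ v i s y|
      ≤ n * (L * Q) * a * Real.exp (lam * s) := fun i s hs hsT y =>
    (abs_flux_sub_le hχ hG0 (fun i j => hG i s hs hsT j y) (fun i => huv.zeroth i s hs hsT y)
      (fun i j => huv.first i s hs hsT j y) i).trans (by apply le_of_eq; ring)
  have hpdflux : ∀ i s, 0 ≤ s → s ≤ T → ∀ c y, |pd (flux χ u i s) c y - pd (flux χ v i s) c y|
      ≤ n * (L * Q) * a * Real.exp (lam * s) := fun i s hs hsT c y =>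
    (abs_pd_flux_sub_le hχ (fun i => (hu i).of_succ) (fun i => (hv i).of_succ) hG0
      (fun i j => hG i s hs hsT j y) (fun i j => hG' i s hs hsT j y)
      (fun i j k => hG2 i s hs hsT j k y) (fun i => huv.zeroth i s hs hsT y)
      (fun i j => huv.first i s hs hsT j y) (fun i j k => huv.second i s hs hsT j k y) i c).trans
      (by apply le_of_eq; ring)
  have hpd : ∀ i s c, pd (fun y => flux χ u i s y - flux χ v i s y) c
      = fun y => pd (flux χ u i s) c y - pd (flux χ v i s) c y := fun i s c => by
    ext y; exact pd_sub ((hfu i).2.1 s y) ((hfv i).2.1 s y) c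
  have hpdpd : ∀ i s c k, pd (fun y => pd (flux χ u i s) c y - pd (flux χ v i s) c y) k
      = fun y => pd (pd (flux χ u i s) c) k y - pd (pd (flux χ v i s) c) k y := fun i s c k => by
    ext y; exact pd_sub (((hfu i).2.2 c).2.1 s y) (((hfv i).2.2 c).2.1 s y) k
  have final : ∀ {κ t : ℝ}, κ * (n * (L * Q)) ≤ 1 / 2 →
      κ * (n * (L * Q) * a * Real.exp (lam * t)) ≤ a * (1 / 2) * Real.exp (lam * t) := by
    intro κ t hκ
    have := mul_le_mul_of_nonneg_right hκ (show 0 ≤ a * Real.exp (lam * t) by positivity)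
    linarith
  refine ⟨fun i t ht htT x => ?_, fun i t ht htT j x => ?_, fun i t ht htT j k x => ?_⟩
  · have e : _root_.picard ν χ h u i t x - _root_.picard ν χ h v i t x
        = -duhamel ν (fun s y => flux χ u i s y - flux χ v i s y) t x := by
      rw [duhamel_sub (hfu i).reg0 (hfv i).reg0]; simp only [_root_.picard]; ring
    rw [e, abs_neg]
    exact (abs_duhamel_le ht hlam (fun s hs hst y => hflux i s hs (hst.trans htT) y) x).trans
      (final h1)
  · have e : pd (_root_.picard ν χ h u i t) j x - pd (_root_.picard ν χ h v i t) j x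
        = -duhamel ν (fun s => pd (fun y => flux χ u i s y - flux χ v i s y) j) t x := by
      simp only [hpd]
      rw [duhamel_sub ((hfu i).2.2 j).reg0 ((hfv i).2.2 j).reg0,
        pd_picard hχ (fun i => (hh i).mono_one) (fun i => (hu i).of_succ),
        pd_picard hχ (fun i => (hh i).mono_one) (fun i => (hv i).of_succ)]
      ring
    rw [e, abs_neg]
    exact ((hfd i).mono_one.abs_duhamel_pd_le hν ht hlam
      (fun s hs hst y => hflux i s hs (hst.trans htT) y) j x).trans (final h2)
  · have e : pd (pd (_root_.picard ν χ h u i t) j) k x - pd (pd (_root_.picard ν χ h v i t) j) k x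
        = -duhamel ν (fun s => pd (fun y => pd (flux χ u i s) j y - pd (flux χ v i s) j y) k)
          t x := by
      simp only [hpdpd]
      rw [duhamel_sub (((hfu i).2.2 j).2.2 k).reg0 (((hfv i).2.2 j).2.2 k).reg0,
        pd_pd_picard hχ hh hu, pd_pd_picard hχ hh hv]
      ring
    rw [e, abs_neg]
    exact (Reg.abs_duhamel_pd_le hν ht hlam (((hfu i).2.2 j).sub ((hfv i).2.2 j))
      (fun s hs hst y => hpdflux i s hs (hst.trans htT) j y) k x).trans (final h2)

/-- The Picard iterates, started from the initial data. -/
def iter (ν : ℝ) (χ : ℝ → ℝ) (h : Fin n → E n → ℝ) : ℕ → Fin n → ℝ → E n → ℝ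
  | 0 => fun i _ => h i
  | k + 1 => picard ν χ h (iter ν χ h k)

lemma Reg.iter (hχ : Cutoff χ L) (hh : ∀ m i, Reg m fun _ => h i) (k : ℕ) :
    ∀ m i, Reg m (iter ν χ h k i) := by
  induction k with
  | zero => exact hh
  | succ k ih => exact fun m i => Reg.picard hχ (hh m) (ih (m + 1)) i

lemma iter_of_nonpos (hν : 0 < ν) (k : ℕ) (i : Fin n) {t : ℝ} (ht : t ≤ 0) :
    iter ν χ h k i t = h i := by
  cases k with
  | zero => rfl
  | succ k => ext x; exact picard_of_nonpos hν i ht x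

lemma DerivBound.iter {K H : ℝ} (hν : 0 < ν) (hχ : Cutoff χ L) (hh : ∀ m i, Reg m fun _ => h i)
    (hK : 0 < K) (hK1 : smoothing n ν K * (n * L) ≤ 1 / 2)
    (hK2 : smoothing n ν (2 * K) * (n * L) ≤ 1 / 2)
    (hH0 : 0 ≤ H) (hH1 : ∀ i j x, |pd (h i) j x| ≤ H) (hH2 : ∀ i j k x, |pd (pd (h i) j) k x| ≤ H)
    (k : ℕ) : DerivBound K H (iter ν χ h k) := by
  induction k with
  | zero =>
    refine ⟨fun i t ht j x => (hH1 i j x).trans ?_, fun i t ht j k x => (hH2 i j k x).trans ?_⟩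
    · have : 1 ≤ Real.exp (K * t) := Real.one_le_exp (by positivity)
      nlinarith
    · have : 1 ≤ Real.exp (2 * K * t) := Real.one_le_exp (by positivity)
      have h4 : 0 ≤ 4 * H ^ 2 := by positivity
      nlinarith
  | succ k ih => exact ih.picard hν hχ (hh 2) (Reg.iter hχ hh k 3) hK hK1 hK2 hH0 hH1 hH2

lemma exists_c2Close_iter {K H : ℝ} (hν : 0 < ν) (hχ : Cutoff χ L)
    (hh : ∀ m i, Reg m fun _ => h i) (hK : 0 < K) (hH0 : 0 ≤ H)
    (hb : ∀ k, DerivBound K H (iter ν χ h k)) (T : ℝ) :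
    ∃ A, ∀ k, C2Close T 0 (A * (1 / 2) ^ k) (iter ν χ h (k + 1)) (iter ν χ h k) := by
  set G := max (2 * H * Real.exp (K * T)) ((4 * H ^ 2 + 2 * H) * Real.exp (2 * K * T)) with hGdef
  have hG0 : 0 ≤ G := le_max_of_le_left (by positivity)
  have hG1 : ∀ k i t, 0 ≤ t → t ≤ T → ∀ j x, |pd (iter ν χ h k i t) j x| ≤ G :=
    fun k i t ht htT j x => ((hb k).first i t ht j x).trans (le_max_of_le_left (by gcongr))
  have hG2 : ∀ k i t, 0 ≤ t → t ≤ T → ∀ j l x, |pd (pd (iter ν χ h k i t) j) l x| ≤ G :=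
    fun k i t ht htT j l x => ((hb k).second i t ht j l x).trans (le_max_of_le_right (by gcongr))
  have hlim1 : Tendsto (fun lam : ℝ => 1 / lam * (n * (L * (G ^ 2 + 3 * G + 1)))) atTop (𝓝 0) := by
    have := (tendsto_inv_atTop_zero (𝕜 := ℝ)).mul_const (n * (L * (G ^ 2 + 3 * G + 1)))
    simpa using this
  have hlim2 := (tendsto_smoothing n ν).mul_const (n * (L * (G ^ 2 + 3 * G + 1)))
  rw [zero_mul] at hlim2
  obtain ⟨lam, hl1, hl2, hlam⟩ := ((hlim1.eventually_le_const (by norm_num : (0 : ℝ) < 1 / 2)).and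
    ((hlim2.eventually_le_const (by norm_num : (0 : ℝ) < 1 / 2)).and (eventually_gt_atTop 0))).exists
  choose B hB using fun i =>
    ((Reg.iter (ν := ν) hχ hh 1 0 i).sub (Reg.iter (ν := ν) hχ hh 0 0 i)).reg0.bdd T
  set a := 2 * G + ∑ i, |B i| with ha
  have hBa : ∀ i, B i ≤ a := fun i => by
    have := Finset.single_le_sum (f := fun i => |B i|) (fun i _ => abs_nonneg _) (Finset.mem_univ i)
    have h2 := le_abs_self (B i)
    linarith
  have hS : 0 ≤ ∑ i, |B i| := Finset.sum_nonneg fun i _ => abs_nonneg _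
  have ha0 : 0 ≤ a := by linarith
  have hae : ∀ t, 0 ≤ t → a ≤ a * (1 / 2) ^ 0 * Real.exp (lam * t) := fun t ht => by
    have : 1 ≤ Real.exp (lam * t) := Real.one_le_exp (by positivity)
    nlinarith
  have main : ∀ k, C2Close T lam (a * (1 / 2) ^ k) (iter ν χ h (k + 1)) (iter ν χ h k) := by
    intro k
    induction k with
    | zero =>
      refine ⟨fun i t ht htT x => ((hB i t htT x).trans (hBa i)).trans (hae t ht),
        fun i t ht htT j x => le_trans ((abs_sub _ _).trans ?_) (hae t ht),
        fun i t ht htT j l x => le_trans ((abs_sub _ _).trans ?_) (hae t ht)⟩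
      · linarith [hG1 (0 + 1) i t ht htT j x, hG1 0 i t ht htT j x]
      · linarith [hG2 (0 + 1) i t ht htT j l x, hG2 0 i t ht htT j l x]
    | succ k ih =>
      rw [pow_succ, ← mul_assoc]
      exact ih.picard hν hχ (hh 2) (Reg.iter hχ hh (k + 1) 3) (Reg.iter hχ hh k 3) hlam hG0
        (by positivity) hl1 hl2 (hG1 (k + 1)) (hG1 k) (hG2 (k + 1))
  have he : ∀ k t, 0 ≤ t → t ≤ T → a * (1 / 2) ^ k * Real.exp (lam * t)
      ≤ a * Real.exp (lam * T) * (1 / 2) ^ k * Real.exp (0 * t) := fun k t ht htT => by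
    have : Real.exp (lam * t) ≤ Real.exp (lam * T) := by gcongr
    rw [zero_mul, Real.exp_zero, mul_one, mul_right_comm]
    gcongr
  exact ⟨a * Real.exp (lam * T), fun k =>
    ⟨fun i t ht htT x => ((main k).zeroth i t ht htT x).trans (he k t ht htT),
    fun i t ht htT j x => ((main k).first i t ht htT j x).trans (he k t ht htT),
    fun i t ht htT j l x => ((main k).second i t ht htT j l x).trans (he k t ht htT)⟩⟩

end DerivativeBounds

section Convergence

open MeasureTheory Topology

variable {n : ℕ}
variable {ν L : ℝ} {χ : ℝ → ℝ} {h : Fin n → E n → ℝ} {u v : Fin n → ℝ → E n → ℝ}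

/-- Consecutive terms are geometrically close, uniformly on `(-∞, T] × ℝⁿ` for every `T`. -/
def GeomCauchy (f : ℕ → ℝ → E n → ℝ) : Prop :=
  ∀ T, ∃ A, ∀ k, ∀ t ≤ T, ∀ x, |f (k + 1) t x - f k t x| ≤ A * (1 / 2) ^ k

/-- Geometric convergence, uniformly on `(-∞, T] × ℝⁿ` for every `T`. -/
def GeomLim (f : ℕ → ℝ → E n → ℝ) (g : ℝ → E n → ℝ) : Prop :=
  ∀ T, ∃ A, ∀ k, ∀ t ≤ T, ∀ x, |f k t x - g t x| ≤ A * (1 / 2) ^ k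

lemma GeomCauchy.exists_geomLim {f : ℕ → ℝ → E n → ℝ} (hf : GeomCauchy f) :
    ∃ g, GeomLim f g := by
  have hd : ∀ T, ∃ A, ∀ t ≤ T, ∀ x k, dist (f k t x) (f (k + 1) t x) ≤ A * (1 / 2) ^ k := fun T => by
    obtain ⟨A, hA⟩ := hf T
    exact ⟨A, fun t ht x k => by rw [dist_comm, Real.dist_eq]; exact hA k t ht x⟩
  have hlim : ∀ t x, ∃ a, Tendsto (fun k => f k t x) atTop (𝓝 a) := fun t x => by
    obtain ⟨A, hA⟩ := hd t
    exact cauchySeq_tendsto_of_complete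
      (cauchySeq_of_le_geometric (1 / 2) A (by norm_num) (hA t le_rfl x))
  choose g hg using hlim
  refine ⟨g, fun T => ?_⟩
  obtain ⟨A, hA⟩ := hd T
  refine ⟨2 * A, fun k t ht x => ?_⟩
  have := dist_le_of_le_geometric_of_tendsto (1 / 2) A (by norm_num) (hA t ht x) (hg t x) k
  rw [Real.dist_eq] at this
  refine this.trans (le_of_eq ?_)
  norm_num; ring

lemma tendsto_geom (A : ℝ) : Tendsto (fun k : ℕ => A * (1 / 2 : ℝ) ^ k) atTop (𝓝 0) := by
  have := (tendsto_pow_atTop_nhds_zero_of_lt_one (r := (1 / 2 : ℝ)) (by norm_num)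
    (by norm_num)).const_mul A
  rwa [mul_zero] at this

lemma GeomLim.tendsto {f : ℕ → ℝ → E n → ℝ} {g : ℝ → E n → ℝ} (hg : GeomLim f g) (t : ℝ)
    (x : E n) : Tendsto (fun k => f k t x) atTop (𝓝 (g t x)) := by
  obtain ⟨A, hA⟩ := hg t
  refine tendsto_iff_dist_tendsto_zero.2 (squeeze_zero (fun _ => dist_nonneg) (fun k => ?_)
    (tendsto_geom A))
  exact hA k t le_rfl x

lemma GeomLim.shift {f : ℕ → ℝ → E n → ℝ} {g : ℝ → E n → ℝ} (hg : GeomLim f g) :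
    GeomLim (fun k => f (k + 1)) g := fun T => by
  obtain ⟨A, hA⟩ := hg T
  exact ⟨A * (1 / 2), fun k t ht x => (hA (k + 1) t ht x).trans (by
    apply le_of_eq; ring)⟩

lemma GeomLim.tendstoUniformlyOn {f : ℕ → ℝ → E n → ℝ} {g : ℝ → E n → ℝ} (hg : GeomLim f g)
    (T : ℝ) : TendstoUniformlyOn (fun k (p : ℝ × E n) => f k p.1 p.2) (fun p => g p.1 p.2) atTop
      {p | p.1 ≤ T} := by
  obtain ⟨A, hA⟩ := hg T
  refine Metric.tendstoUniformlyOn_iff.2 fun ε hε => ?_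
  filter_upwards [(tendsto_geom A).eventually_lt_const hε] with k hk p hp
  rw [dist_comm]
  exact (hA k p.1 hp p.2).trans_lt hk

lemma GeomLim.reg0 {f : ℕ → ℝ → E n → ℝ} {g : ℝ → E n → ℝ} (hg : GeomLim f g)
    (hf : ∀ k, Reg0 (f k)) : Reg0 g := by
  refine ⟨continuous_iff_continuousAt.2 fun p => ?_, fun T => ?_⟩
  · have h1 := (hg.tendstoUniformlyOn (p.1 + 1)).continuousOn
      (.of_forall fun k => (hf k).cont.continuousOn)
    refine h1.continuousAt ?_
    filter_upwards [continuous_fst.continuousAt.eventually_lt continuousAt_const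
      (show p.1 < p.1 + 1 by linarith)] with q hq
    exact hq.le
  · obtain ⟨A, hA⟩ := hg T
    obtain ⟨C, hC⟩ := (hf 0).bdd T
    refine ⟨C + A, fun t ht x => ?_⟩
    have h1 := hA 0 t ht x
    have h2 := hC t ht x
    rw [pow_zero, mul_one] at h1
    rw [abs_le] at *
    constructor <;> linarith [h1.1, h1.2, h2.1, h2.2]

lemma GeomLim.hasFDerivAt {f : ℕ → ℝ → E n → ℝ} {g : ℝ → E n → ℝ} {g' : Fin n → ℝ → E n → ℝ}
    (hf : ∀ k t, Differentiable ℝ (f k t)) (hg : GeomLim f g)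
    (hg' : ∀ j, GeomLim (fun k t => pd (f k t) j) (g' j)) (t : ℝ) (x : E n) :
    HasFDerivAt (g t) (∑ j, g' j t x • (EuclideanSpace.proj j : E n →L[ℝ] ℝ)) x := by
  refine hasFDerivAt_of_tendstoUniformly (l := atTop) (f := fun k => f k t)
    (f' := fun k x => ∑ j, pd (f k t) j x • (EuclideanSpace.proj j : E n →L[ℝ] ℝ))
    (g' := fun x => ∑ j, g' j t x • (EuclideanSpace.proj j : E n →L[ℝ] ℝ)) ?_
    (fun k x => by rw [← fderiv_eq_sum_pd]; exact (hf k t x).hasFDerivAt)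
    (fun x => hg.tendsto t x) x
  choose A hA using fun j => hg' j t
  refine Metric.tendstoUniformly_iff.2 fun ε hε => ?_
  filter_upwards [(tendsto_geom (∑ j, A j)).eventually_lt_const hε] with k hk x
  refine lt_of_le_of_lt ?_ hk
  rw [dist_comm, dist_eq_norm, ← Finset.sum_sub_distrib, Finset.sum_mul]
  simp only [← sub_smul]
  refine (norm_sum_smul_proj_le _).trans (Finset.sum_le_sum fun j _ => ?_)
  exact hA j k t le_rfl x

lemma GeomLim.hasDerivAt {f f' : ℕ → ℝ → E n → ℝ} {g g' : ℝ → E n → ℝ} (hg : GeomLim f g)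
    (hg' : GeomLim f' g') (x : E n) {t : ℝ} (ht : 0 < t)
    (hf : ∀ k s, 0 < s → HasDerivAt (fun s => f k s x) (f' k s x) s) :
    HasDerivAt (fun s => g s x) (g' t x) t := by
  refine hasDerivAt_of_tendstoUniformlyOn (l := atTop) (s := Ioo 0 (t + 1)) isOpen_Ioo
    (f := fun k s => f k s x) (f' := fun k s => f' k s x) (g' := fun s => g' s x) ?_
    (.of_forall fun k s hs => hf k s hs.1) (fun s _ => hg.tendsto s x) ⟨ht, by linarith⟩
  exact ((hg'.tendstoUniformlyOn (t + 1)).comp fun s => (s, x)).mono fun s hs => hs.2.le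

/-- The truncated system has a global solution, with exponential derivative bounds. -/
theorem exists_truncated_solution {K H : ℝ} (hν : 0 < ν) (hχ : Cutoff χ L)
    (hh : ∀ m i, Reg m fun _ => h i) (hK : 0 < K) (hK1 : smoothing n ν K * (n * L) ≤ 1 / 2)
    (hK2 : smoothing n ν (2 * K) * (n * L) ≤ 1 / 2)
    (hH0 : 0 ≤ H) (hH1 : ∀ i j x, |pd (h i) j x| ≤ H)
    (hH2 : ∀ i j k x, |pd (pd (h i) j) k x| ≤ H) :
    ∃ u : Fin n → ℝ → E n → ℝ, (∀ i, Reg 2 (u i)) ∧ DerivBound K H u ∧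
      (∀ i t, t ≤ 0 → u i t = h i) ∧
      ∀ i t x, 0 < t → HasDerivAt (fun s => u i s x)
        (ν * ∑ j, pd (pd (u i t) j) j x - flux χ u i t x) t := by
  have hb := fun k => DerivBound.iter hν hχ hh hK hK1 hK2 hH0 hH1 hH2 k
  have hR := fun k => Reg.iter (ν := ν) hχ hh k
  have hclose := exists_c2Close_iter hν hχ hh hK hH0 hb
  have hnp : ∀ k i t, t ≤ 0 → iter ν χ h k i t = h i := fun k i t ht => iter_of_nonpos hν k i ht
  have hcau : ∀ {f : ℕ → ℝ → E n → ℝ}, (∀ k t x, t ≤ 0 → f (k + 1) t x = f k t x) →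
      (∀ T, ∃ A, ∀ k t, 0 ≤ t → t ≤ T → ∀ x, |f (k + 1) t x - f k t x| ≤ A * (1 / 2) ^ k) →
      GeomCauchy f := by
    intro f h1 h2 T
    obtain ⟨A, hA⟩ := h2 T
    refine ⟨|A|, fun k t htT x => ?_⟩
    rcases le_total t 0 with ht | ht
    · rw [h1 k t x ht, sub_self, abs_zero]; positivity
    · exact (hA k t ht htT x).trans (by gcongr; exact le_abs_self A)
  have c0 : ∀ i, GeomCauchy fun k => iter ν χ h k i := fun i =>
    hcau (fun k t x ht => by rw [hnp _ _ _ ht, hnp _ _ _ ht]) fun T => by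
      obtain ⟨A, hA⟩ := hclose T
      exact ⟨A, fun k t ht htT x => by simpa using (hA k).zeroth i t ht htT x⟩
  have c1 : ∀ i j, GeomCauchy fun k t => pd (iter ν χ h k i t) j := fun i j =>
    hcau (fun k t x ht => by rw [hnp _ _ _ ht, hnp _ _ _ ht]) fun T => by
      obtain ⟨A, hA⟩ := hclose T
      exact ⟨A, fun k t ht htT x => by simpa using (hA k).first i t ht htT j x⟩
  have c2 : ∀ i j l, GeomCauchy fun k t => pd (pd (iter ν χ h k i t) j) l := fun i j l =>
    hcau (fun k t x ht => by rw [hnp _ _ _ ht, hnp _ _ _ ht]) fun T => by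
      obtain ⟨A, hA⟩ := hclose T
      exact ⟨A, fun k t ht htT x => by simpa using (hA k).second i t ht htT j l x⟩
  have cF : ∀ i, GeomCauchy fun k => flux χ (iter ν χ h k) i := fun i =>
    hcau (fun k t x ht => by simp only [flux, hnp _ _ _ ht]) fun T => by
      obtain ⟨A, hA⟩ := hclose T
      set G := 2 * H * Real.exp (K * T)
      refine ⟨n * (L * ((G ^ 2 + 3 * G + 1) * A)), fun k t ht htT x => ?_⟩
      refine (abs_flux_sub_le (d := A * (1 / 2) ^ k) (G := G) hχ (by positivity)
        (fun i j => ((hb (k + 1)).first i t ht j x).trans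
          (show _ ≤ 2 * H * Real.exp (K * T) by gcongr))
        (fun i => by simpa using (hA k).zeroth i t ht htT x)
        (fun i j => by simpa using (hA k).first i t ht htT j x) i).trans (by apply le_of_eq; ring)
  choose u hu using fun i => (c0 i).exists_geomLim
  choose u1 hu1 using fun i j => (c1 i j).exists_geomLim
  choose u2 hu2 using fun i j l => (c2 i j l).exists_geomLim
  choose uF huF using fun i => (cF i).exists_geomLim
  have d1 : ∀ i t x, HasFDerivAt (u i t)
      (∑ j, u1 i j t x • (EuclideanSpace.proj j : E n →L[ℝ] ℝ)) x := fun i t x =>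
    GeomLim.hasFDerivAt (fun k t => (hR k 1 i).2.1 t) (hu i) (hu1 i) t x
  have p1 : ∀ i j t, pd (u i t) j = u1 i j t := fun i j t => by
    ext x; exact (d1 i t x).pd_eq j
  have d2 : ∀ i j t x, HasFDerivAt (u1 i j t)
      (∑ l, u2 i j l t x • (EuclideanSpace.proj l : E n →L[ℝ] ℝ)) x := fun i j t x =>
    GeomLim.hasFDerivAt (fun k t => ((hR k 2 i).2.2 j).2.1 t) (hu1 i j) (hu2 i j) t x
  have p2 : ∀ i j l t, pd (pd (u i t) j) l = u2 i j l t := fun i j l t => by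
    ext x; rw [p1]; exact (d2 i j t x).pd_eq l
  have pF : ∀ i t x, uF i t x = flux χ u i t x := fun i t x => by
    refine tendsto_nhds_unique ((huF i).tendsto t x) ?_
    refine tendsto_finsetSum _ fun j _ => ?_
    rw [p1]
    exact ((hχ.smooth.continuous.tendsto _).comp ((hu j).tendsto t x)).mul ((hu1 i j).tendsto t x)
  refine ⟨u, fun i => ⟨(hu i).reg0 fun k => hR k 0 i, fun t x => (d1 i t x).differentiableAt,
    fun j => ⟨?_, fun t x => ?_, fun l => ?_⟩⟩, ⟨fun i t ht j x => ?_, fun i t ht j l x => ?_⟩,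
    fun i t ht => ?_, fun i t x ht => ?_⟩
  · simp only [p1]
    exact (hu1 i j).reg0 fun k => ((hR k 1 i).2.2 j).reg0
  · simp only [p1]; exact (d2 i j t x).differentiableAt
  · simp only [p2]
    exact (hu2 i j l).reg0 fun k => (((hR k 2 i).2.2 j).2.2 l).reg0
  · rw [p1]
    exact le_of_tendsto ((hu1 i j).tendsto t x).abs (.of_forall fun k => (hb k).first i t ht j x)
  · rw [p2]
    exact le_of_tendsto ((hu2 i j l).tendsto t x).abs
      (.of_forall fun k => (hb k).second i t ht j l x)
  · ext x
    refine tendsto_nhds_unique ((hu i).tendsto t x) ?_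
    simp only [hnp _ _ _ ht]
    exact tendsto_const_nhds
  · have hG : GeomLim (fun k t x => ν * ∑ j, pd (pd (iter ν χ h (k + 1) i t) j) j x
        - flux χ (iter ν χ h k) i t x) (fun t x => ν * ∑ j, u2 i j j t x - uF i t x) := fun T => by
      choose A hA using fun j => (hu2 i j j).shift T
      obtain ⟨B, hB⟩ := huF i T
      refine ⟨ν * ∑ j, A j + B, fun k t ht x => ?_⟩
      rw [sub_sub_sub_comm, ← mul_sub, ← Finset.sum_sub_distrib, add_mul, mul_assoc, Finset.sum_mul]
      refine (abs_sub _ _).trans (add_le_add ?_ (hB k t ht x))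
      rw [abs_mul, abs_of_pos hν]
      refine mul_le_mul_of_nonneg_left ?_ hν.le
      exact (Finset.abs_sum_le_sum_abs _ _).trans (Finset.sum_le_sum fun j _ => hA j k t ht x)
    have key := (hu i).shift.hasDerivAt hG x ht fun k s hs =>
      hasDerivAt_picard hν hχ (hh 2) (hR k 3) i hs x
    simpa only [p2, ← pF] using key

end Convergence

section MaximumPrinciple

open MeasureTheory Topology

variable {n : ℕ}

lemma HasCompactSupport.exists_abs_le {g : ℝ → ℝ} (hg : HasCompactSupport g) (hc : Continuous g) :
    ∃ C, 0 ≤ C ∧ ∀ s, |g s| ≤ C := by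
  obtain ⟨C, hC⟩ := hg.exists_bound_of_continuous hc
  exact ⟨C, (norm_nonneg _).trans (hC 0), hC⟩

lemma abs_sub_le_of_abs_deriv_le {g : ℝ → ℝ} (hg : Differentiable ℝ g) {C : ℝ}
    (hC : ∀ s, |deriv g s| ≤ C) (s s' : ℝ) : |g s - g s'| ≤ C * |s - s'| :=
  convex_univ.norm_image_sub_le_of_norm_deriv_le (fun x _ => hg x) (fun x _ => hC x)
    (mem_univ s') (mem_univ s)

/-- There is a cutoff which is the identity on a prescribed interval. -/
lemma exists_cutoff {M : ℝ} (hM : 0 ≤ M) :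
    ∃ χ L, Cutoff χ L ∧ ∀ s, |s| ≤ M → χ s = s := by
  let b : ContDiffBump (0 : ℝ) := ⟨M + 1, M + 2, by linarith, by linarith⟩
  set χ : ℝ → ℝ := fun s => s * b s with hχ
  have hs : ContDiff ℝ (⊤ : ℕ∞) χ := contDiff_id.mul b.contDiff
  have hcs : HasCompactSupport χ := b.hasCompactSupport.mul_left
  have hs1 : ContDiff ℝ (⊤ : ℕ∞) (deriv χ) := ((contDiff_infty_iff_deriv (f := χ)).1 hs).2
  have hs2 : ContDiff ℝ (⊤ : ℕ∞) (deriv (deriv χ)) :=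
    ((contDiff_infty_iff_deriv (f := deriv χ)).1 hs1).2
  obtain ⟨A, hA0, hA⟩ := hcs.exists_abs_le hs.continuous
  obtain ⟨B, hB0, hB⟩ := hcs.deriv.exists_abs_le hs1.continuous
  obtain ⟨C, hC0, hC⟩ := hcs.deriv.deriv.exists_abs_le hs2.continuous
  refine ⟨χ, A + B + C, ⟨hs, fun s => (hA s).trans (by linarith), fun s => (hB s).trans (by linarith),
    abs_sub_le_of_abs_deriv_le (hs.differentiable (by simp)) fun s => (hB s).trans (by linarith),
    abs_sub_le_of_abs_deriv_le (hs1.differentiable (by simp)) fun s => (hC s).trans (by linarith)⟩,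
    fun s hsM => ?_⟩
  have : b s = 1 := b.one_of_mem_closedBall (by
    rw [mem_closedBall_zero_iff, Real.norm_eq_abs]; exact hsM.trans (by simp [b]))
  simp [hχ, this]

lemma second_deriv_nonpos_of_isLocalMax {g g1 : ℝ → ℝ} {d a : ℝ} (hg : ∀ s, HasDerivAt g (g1 s) s)
    (hg1 : HasDerivAt g1 d a) (hmax : IsLocalMax g a) : d ≤ 0 := by
  have e : deriv g = g1 := funext fun s => (hg s).deriv
  by_contra! hd
  have hmin : IsLocalMin g a := isLocalMin_of_deriv_deriv_pos (by rw [e, hg1.deriv]; exact hd)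
    hmax.deriv_eq_zero (hg a).continuousAt
  have hconst : g =ᶠ[𝓝 a] fun _ => g a := by
    filter_upwards [hmax, hmin] with s h1 h2 using le_antisymm h1 h2
  have h2 : deriv (deriv g) a = 0 := by
    rw [hconst.deriv.deriv_eq]; simp
  rw [e, hg1.deriv] at h2
  linarith

lemma deriv_nonneg_of_forall_le {f : ℝ → ℝ} {d t : ℝ} (ht : 0 < t) (hf : HasDerivAt f d t)
    (hle : ∀ s, 0 ≤ s → s ≤ t → f s ≤ f t) : 0 ≤ d := by
  have h1 := (hasDerivAt_iff_tendsto_slope.1 hf).mono_left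
    (nhdsWithin_mono t (show Iio t ⊆ {t}ᶜ from fun s hs => ne_of_lt hs))
  refine ge_of_tendsto h1 ?_
  filter_upwards [Ioo_mem_nhdsLT ht] with s hs
  rw [slope_def_field]
  exact div_nonneg_of_nonpos (by linarith [hle s hs.1.le hs.2.le]) (by linarith [hs.2])

lemma hasDerivAt_line {f : E n → ℝ} (hf : Differentiable ℝ f) (x : E n) (j : Fin n) (s : ℝ) :
    HasDerivAt (fun s : ℝ => f (x + s • EuclideanSpace.single j (1 : ℝ)))
      (pd f j (x + s • EuclideanSpace.single j (1 : ℝ))) s := by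
  have h1 : HasDerivAt (fun s : ℝ => x + s • EuclideanSpace.single j (1 : ℝ))
      ((1 : ℝ) • EuclideanSpace.single j (1 : ℝ)) s :=
    ((hasDerivAt_id s).smul_const _).const_add x
  rw [one_smul] at h1
  exact (hf _).hasFDerivAt.comp_hasDerivAt s h1

lemma norm_sq_line (x : E n) (j : Fin n) (s : ℝ) :
    ‖x + s • EuclideanSpace.single j (1 : ℝ)‖ ^ 2 = ‖x‖ ^ 2 + 2 * s * x j + s ^ 2 := by
  rw [norm_add_sq_real, inner_smul_right, EuclideanSpace.inner_single_right, norm_smul]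
  simp
  ring

/-- At a spatial maximum of `f - a * (1 + ‖x‖²)`. -/
lemma pd_of_max {f : E n → ℝ} (hf : Differentiable ℝ f) {j : Fin n}
    (hf1 : Differentiable ℝ (pd f j)) {a : ℝ} {x : E n}
    (hmax : ∀ y, f y - a * (1 + ‖y‖ ^ 2) ≤ f x - a * (1 + ‖x‖ ^ 2)) :
    pd f j x = a * (2 * x j) ∧ pd (pd f j) j x ≤ a * 2 := by
  set e := EuclideanSpace.single j (1 : ℝ)
  set g : ℝ → ℝ := fun s => f (x + s • e) - a * (1 + (‖x‖ ^ 2 + 2 * s * x j + s ^ 2)) with hgdef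
  have hg : ∀ s, HasDerivAt g (pd f j (x + s • e) - a * (2 * x j + 2 * s)) s := fun s => by
    have h1 : HasDerivAt (fun s : ℝ => a * (1 + (‖x‖ ^ 2 + 2 * s * x j + s ^ 2)))
        (a * (2 * x j + 2 * s)) s := by
      have := ((((((hasDerivAt_id s).const_mul 2).mul_const (x j)).const_add (‖x‖ ^ 2)).add
        ((hasDerivAt_id s).pow 2)).const_add 1).const_mul a
      convert! this using 1
      simp
    exact (hasDerivAt_line hf x j s).sub h1
  have hg1 : HasDerivAt (fun s : ℝ => pd f j (x + s • e) - a * (2 * x j + 2 * s))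
      (pd (pd f j) j x - a * 2) 0 := by
    have h1 : HasDerivAt (fun s : ℝ => a * (2 * x j + 2 * s)) (a * 2) 0 := by
      have := (((hasDerivAt_id (0 : ℝ)).const_mul 2).const_add (2 * x j)).const_mul a
      convert! this using 1
      simp
    have h2 := hasDerivAt_line hf1 x j 0
    rw [zero_smul, add_zero] at h2
    exact h2.sub h1
  have hm : IsLocalMax g 0 := .of_forall fun s => by
    have := hmax (x + s • e)
    rw [norm_sq_line] at this
    simpa [hgdef] using this
  constructor
  · have := hm.hasDerivAt_eq_zero (hg 0)
    simp at this
    linarith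
  · linarith [second_deriv_nonpos_of_isLocalMax hg hg1 hm]

/-- The maximum principle for a convection-diffusion equation with bounded drift. -/
theorem maximum_principle {ν L M : ℝ} (hν : 0 < ν) {w : ℝ → E n → ℝ} (hw : Reg 2 w)
    {b : Fin n → ℝ → E n → ℝ} (hb : ∀ j t x, |b j t x| ≤ L) (h0 : ∀ x, w 0 x ≤ M)
    (hpde : ∀ t x, 0 < t → HasDerivAt (fun s => w s x)
      (ν * ∑ j, pd (pd (w t) j) j x - ∑ j, b j t x * pd (w t) j x) t)
    {t : ℝ} (ht : 0 ≤ t) (x : E n) : w t x ≤ M := by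
  set A := 2 * ν * n + n * |L| + 1 with hA
  have key : ∀ ε, 0 < ε → w t x - M - ε * Real.exp (A * t) * (1 + ‖x‖ ^ 2) ≤ 0 := by
    intro ε hε
    by_contra! hpos
    have hA0 : 0 ≤ A := by positivity
    obtain ⟨C, hC⟩ := hw.1.bdd t
    set φ : ℝ × E n → ℝ := fun p => w p.1 p.2 - M - ε * Real.exp (A * p.1) * (1 + ‖p.2‖ ^ 2)
      with hφ
    have hφc : Continuous φ := by
      have := hw.1.cont
      fun_prop
    set R := max ‖x‖ (|C - M| / ε) with hR
    have hRx : ‖x‖ ≤ R := le_max_left _ _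
    have hneg : ∀ s y, 0 ≤ s → s ≤ t → R < ‖y‖ → φ (s, y) ≤ 0 := by
      intro s y hs hst hy
      have h1 : |C - M| / ε < ‖y‖ := (le_max_right _ _).trans_lt hy
      rw [div_lt_iff₀ hε] at h1
      have h2 := (abs_le.1 (hC s hst y)).2
      have h3 : 1 ≤ Real.exp (A * s) := Real.one_le_exp (by positivity)
      have h4 : ‖y‖ ≤ 1 + ‖y‖ ^ 2 := by nlinarith [sq_nonneg (‖y‖ - 1)]
      have h5 : ε * 1 * ‖y‖ ≤ ε * Real.exp (A * s) * (1 + ‖y‖ ^ 2) := by gcongr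
      have h6 := le_abs_self (C - M)
      simp only [hφ]
      linarith
    obtain ⟨⟨t₀, x₀⟩, ⟨⟨ht0, ht0t⟩, hx₀⟩, hmax⟩ :=
      (isCompact_Icc.prod (isCompact_closedBall (0 : E n) R)).exists_isMaxOn
        ⟨(t, x), ⟨⟨ht, le_rfl⟩, by simpa using hRx⟩⟩ hφc.continuousOn
    simp only at ht0 ht0t hx₀
    have hval : 0 < φ (t₀, x₀) :=
      hpos.trans_le (hmax (show (t, x) ∈ _ from ⟨⟨ht, le_rfl⟩, by simpa using hRx⟩))
    have hmax' : ∀ s y, 0 ≤ s → s ≤ t → φ (s, y) ≤ φ (t₀, x₀) := by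
      intro s y hs hst
      rcases le_or_gt ‖y‖ R with h | h
      · exact hmax (show (s, y) ∈ _ from ⟨⟨hs, hst⟩, by simpa using h⟩)
      · exact (hneg s y hs hst h).trans hval.le
    have ht0' : 0 < t₀ := by
      rcases ht0.eq_or_lt with h | h
      · exfalso
        rw [← h] at hval
        simp only [hφ, mul_zero, Real.exp_zero] at hval
        have := h0 x₀
        have h2 : 0 < ε * 1 * (1 + ‖x₀‖ ^ 2) := by positivity
        linarith
      · exact h
    set a := ε * Real.exp (A * t₀) with ha
    have ha0 : 0 < a := by positivity
    have hsp := fun j => pd_of_max (a := a) (x := x₀) (hw.2.1 t₀) ((hw.2.2 j).2.1 t₀) fun y => by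
      have := hmax' t₀ y ht0 ht0t
      simp only [hφ] at this
      linarith
    have hder : HasDerivAt (fun s => φ (s, x₀))
        (ν * ∑ j, pd (pd (w t₀) j) j x₀ - ∑ j, b j t₀ x₀ * pd (w t₀) j x₀
          - A * a * (1 + ‖x₀‖ ^ 2)) t₀ := by
      have h1 : HasDerivAt (fun s => ε * Real.exp (A * s) * (1 + ‖x₀‖ ^ 2))
          (A * a * (1 + ‖x₀‖ ^ 2)) t₀ := by
        have := ((((hasDerivAt_id t₀).const_mul A).exp).const_mul ε).mul_const (1 + ‖x₀‖ ^ 2)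
        convert! this using 1
        simp only [ha, id]; ring
      exact ((hpde t₀ x₀ ht0').sub_const M).sub h1
    have hge := deriv_nonneg_of_forall_le ht0' hder fun s hs hst => hmax' s x₀ hs (hst.trans ht0t)
    have e1 : ∑ j, pd (pd (w t₀) j) j x₀ ≤ n * (a * 2) :=
      (Finset.sum_le_sum fun j _ => (hsp j).2).trans (by simp)
    have e2 : |∑ j, b j t₀ x₀ * pd (w t₀) j x₀| ≤ n * (|L| * (a * (1 + ‖x₀‖ ^ 2))) := by
      refine abs_sum_le_card_mul fun j => ?_
      rw [abs_mul, (hsp j).1, abs_mul, abs_of_pos ha0, abs_mul, abs_two]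
      have h1 := abs_coord_le x₀ j
      have h2 : 2 * |x₀ j| ≤ 1 + ‖x₀‖ ^ 2 := by nlinarith [sq_nonneg (‖x₀‖ - 1)]
      exact mul_le_mul ((hb j t₀ x₀).trans (le_abs_self L))
        (mul_le_mul_of_nonneg_left h2 ha0.le) (by positivity) (abs_nonneg L)
    have e3 := neg_abs_le (∑ j, b j t₀ x₀ * pd (w t₀) j x₀)
    have e4 := mul_le_mul_of_nonneg_left e1 hν.le
    have e5 : 0 ≤ 2 * ν * n * a * ‖x₀‖ ^ 2 := by positivity
    have e6 : 0 < a * (1 + ‖x₀‖ ^ 2) := by positivity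
    rw [hA] at hge
    nlinarith
  by_contra! hlt
  set P := Real.exp (A * t) * (1 + ‖x‖ ^ 2) with hP
  have hP0 : 0 < P := by positivity
  have := key ((w t x - M) / (2 * P)) (div_pos (by linarith) (by positivity))
  rw [mul_assoc, ← hP] at this
  have h2 : (w t x - M) / (2 * P) * P = (w t x - M) / 2 := by field_simp
  rw [h2] at this
  linarith

end MaximumPrinciple

section Growth

open MeasureTheory Topology

variable {n : ℕ}

lemma sup0_le {T C : ℝ} (hC : 0 ≤ C) {w : ℝ → E n → ℝ}
    (hw : ∀ t, 0 ≤ t → t ≤ T → ∀ x, |w t x| ≤ C) : sup0 T w ≤ C :=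
  Real.iSup_le (fun t => Real.iSup_le (fun x => hw t.1 t.2.1 t.2.2 x) hC) hC

lemma harmonic_cast_eq (l : ℕ) : ((harmonic l : ℚ) : ℝ) = ∑ k ∈ Finset.Icc 1 l, (k : ℝ)⁻¹ := by
  rw [harmonic_eq_sum_Icc]; push_cast; rfl

lemma sum_step_le {Cn M : ℝ} (hCn : 0 < Cn) (hM : 0 ≤ M) (l : ℕ) :
    ∑ k ∈ Finset.Icc 1 l, 1 / (4 * Cn * (M + 1 + (k : ℝ) - 1))
      ≤ 1 / (4 * Cn) * (1 + Real.log l) := by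
  refine le_trans ?_ (mul_le_mul_of_nonneg_left (harmonic_le_one_add_log l) (by positivity))
  rw [harmonic_cast_eq, Finset.mul_sum]
  refine Finset.sum_le_sum fun k hk => ?_
  have hk1 : (1 : ℝ) ≤ k := by exact_mod_cast (Finset.mem_Icc.1 hk).1
  rw [← one_div, div_mul_div_comm, one_mul]
  have : 0 < 4 * Cn * (k : ℝ) := by positivity
  gcongr
  linarith

lemma tendsto_sum_step {Cn M : ℝ} (hCn : 0 < Cn) (hM : 0 ≤ M) :
    Tendsto (fun l : ℕ => ∑ k ∈ Finset.Icc 1 l, 1 / (4 * Cn * (M + 1 + (k : ℝ) - 1)))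
      atTop atTop := by
  have h1 : Tendsto (fun l : ℕ => Real.log ((l + 1 : ℕ) : ℝ)) atTop atTop :=
    Real.tendsto_log_atTop.comp (tendsto_natCast_atTop_atTop.comp (tendsto_add_atTop_nat 1))
  refine tendsto_atTop_mono (fun l => ?_)
    (h1.const_mul_atTop (show 0 < 1 / (4 * Cn * (M + 1)) by positivity))
  refine (mul_le_mul_of_nonneg_left (log_add_one_le_harmonic l) (by positivity)).trans ?_
  rw [harmonic_cast_eq, Finset.mul_sum]
  refine Finset.sum_le_sum fun k hk => ?_
  have hk1 : (1 : ℝ) ≤ k := by exact_mod_cast (Finset.mem_Icc.1 hk).1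
  rw [← one_div, div_mul_div_comm, one_mul, mul_assoc (4 * Cn)]
  have h2 : M + 1 + (k : ℝ) - 1 ≤ (M + 1) * k := by nlinarith
  have h3 : 0 < M + 1 + (k : ℝ) - 1 := by linarith
  gcongr

/-- If `f` is constant for nonpositive times, its two-sided derivative at zero vanishes (also by
convention if it does not exist). -/
lemma deriv_zero_of_const_nonpos {f : ℝ → ℝ} {c : ℝ} (hf : ∀ t ≤ 0, f t = c) : deriv f 0 = 0 := by
  by_cases hd : DifferentiableAt ℝ f 0
  · have h1 : HasDerivWithinAt f 0 (Iic 0) 0 :=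
      (hasDerivWithinAt_const (0 : ℝ) (Iic 0) c).congr (fun t ht => hf t ht) (hf 0 le_rfl)
    exact (uniqueDiffWithinAt_Iic 0).eq_deriv _ hd.hasDerivAt.hasDerivWithinAt h1
  · exact deriv_zero_of_not_differentiableAt hd

lemma norm12_le {ν L K H M T : ℝ} {χ : ℝ → ℝ} {h : Fin n → E n → ℝ} {u : Fin n → ℝ → E n → ℝ}
    (hν : 0 < ν) (hχ : Cutoff χ L) (hK : 0 < K) (hH : 0 ≤ H) (hM : 0 ≤ M)
    (hT : 0 ≤ T) (hb : DerivBound K H u) (huM : ∀ i t x, 0 ≤ t → |u i t x| ≤ M)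
    (h0 : ∀ i t, t ≤ 0 → u i t = h i)
    (hpde : ∀ i t x, 0 < t → HasDerivAt (fun s => u i s x)
        (ν * ∑ j, pd (pd (u i t) j) j x - flux χ u i t x) t) (i : Fin n) :
    norm12 T (u i) ≤ (M + n * (2 * H) + (ν * (n * (4 * H ^ 2 + 2 * H)) + n * (L * (2 * H)))
      + n * (n * (4 * H ^ 2 + 2 * H))) * Real.exp (2 * K * T) := by
  have hL := hχ.nonneg
  set P := 4 * H ^ 2 + 2 * H with hP
  have hP0 : 0 ≤ P := by positivity
  have hX1 : 1 ≤ Real.exp (2 * K * T) := Real.one_le_exp (by positivity)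
  have hX : ∀ t, 0 ≤ t → t ≤ T → Real.exp (K * t) ≤ Real.exp (2 * K * T) := fun t ht htT => by
    apply Real.exp_le_exp.2; nlinarith
  have hX2 : ∀ t, 0 ≤ t → t ≤ T → Real.exp (2 * K * t) ≤ Real.exp (2 * K * T) :=
    fun t ht htT => by gcongr
  set X := Real.exp (2 * K * T)
  have b0 : sup0 T (u i) ≤ M * X := sup0_le (by positivity) fun t ht _ x =>
    (huM i t x ht).trans (le_mul_of_one_le_right hM hX1)
  have f1 : ∀ t, 0 ≤ t → t ≤ T → ∀ j x, |pd (u i t) j x| ≤ 2 * H * X := fun t ht htT j x =>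
    (hb.first i t ht j x).trans (mul_le_mul_of_nonneg_left (hX t ht htT) (by positivity))
  have f2 : ∀ t, 0 ≤ t → t ≤ T → ∀ j k x, |pd (pd (u i t) j) k x| ≤ P * X :=
    fun t ht htT j k x =>
      (hb.second i t ht j k x).trans (mul_le_mul_of_nonneg_left (hX2 t ht htT) hP0)
  have b1 : (∑ j : Fin n, sup0 T fun t x => pd (u i t) j x) ≤ n * (2 * H * X) :=
    (Finset.sum_le_sum fun j _ => sup0_le (by positivity) fun t ht htT x => f1 t ht htT j x).trans
      (by simp)
  have b2 : (∑ j : Fin n, ∑ k : Fin n, sup0 T fun t x => pd (pd (u i t) j) k x)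
      ≤ n * (n * (P * X)) :=
    (Finset.sum_le_sum fun j _ => Finset.sum_le_sum fun k _ => sup0_le (by positivity)
      fun t ht htT x => f2 t ht htT j k x).trans (by simp)
  have bt : sup0 T (fun t x => deriv (fun s => u i s x) t)
      ≤ ν * (n * (P * X)) + n * (L * (2 * H * X)) := by
    refine sup0_le (by positivity) fun t ht htT x => ?_
    rcases ht.eq_or_lt with rfl | ht'
    · rw [deriv_zero_of_const_nonpos fun t ht => congrFun (h0 i t ht) x, abs_zero]
      positivity
    · rw [(hpde i t x ht').deriv]
      refine (abs_sub _ _).trans (add_le_add ?_ (abs_flux_le hχ fun j => f1 t ht htT j x))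
      rw [abs_mul, abs_of_pos hν]
      exact mul_le_mul_of_nonneg_left (abs_sum_le_card_mul fun j => f2 t ht htT j j x) hν.le
  rw [norm12]
  linarith

/-- Smooth data with bounded derivatives admit uniform bounds up to second order. -/
lemma exists_data_bounds {h : Fin n → E n → ℝ} (hh : ∀ m i, Reg m fun _ => h i) :
    ∃ M H : ℝ, 0 ≤ M ∧ 0 ≤ H ∧ (∀ i x, |h i x| ≤ M) ∧ (∀ i j x, |pd (h i) j x| ≤ H) ∧
      ∀ i j k x, |pd (pd (h i) j) k x| ≤ H := by
  choose m0 hm0 using fun i => (hh 0 i).exists_bound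
  choose m1 hm1 using fun i j => Reg.exists_bound ((hh 1 i).2.2 j)
  choose m2 hm2 using fun i j k => Reg.exists_bound (((hh 2 i).2.2 j).2.2 k)
  have hle : ∀ {ι : Type} [Fintype ι] (f : ι → ℝ) (i : ι), f i ≤ ∑ i, |f i| := fun f i =>
    (le_abs_self _).trans
      (Finset.single_le_sum (f := fun i => |f i|) (fun _ _ => abs_nonneg _) (Finset.mem_univ i))
  have hs1 : 0 ≤ ∑ p : Fin n × Fin n, |m1 p.1 p.2| := Finset.sum_nonneg fun _ _ => abs_nonneg _
  have hs2 : 0 ≤ ∑ p : Fin n × Fin n × Fin n, |m2 p.1 p.2.1 p.2.2| :=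
    Finset.sum_nonneg fun _ _ => abs_nonneg _
  exact ⟨∑ i, |m0 i|, _, Finset.sum_nonneg fun _ _ => abs_nonneg _, add_nonneg hs1 hs2,
    fun i x => (hm0 i x).trans (hle m0 i),
    fun i j x => (hm1 i j x).trans
      ((hle (fun p : Fin n × Fin n => m1 p.1 p.2) (i, j)).trans (le_add_of_nonneg_right hs2)),
    fun i j k x => (hm2 i j k x).trans
      ((hle (fun p : Fin n × Fin n × Fin n => m2 p.1 p.2.1 p.2.2) (i, j, k)).trans
        (le_add_of_nonneg_left hs1))⟩

/-- Solutions of the truncated system obey the bound satisfied by the data. -/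
lemma abs_le_of_truncated {ν L M : ℝ} {χ : ℝ → ℝ} {u : Fin n → ℝ → E n → ℝ}
    (hν : 0 < ν) (hχ : Cutoff χ L) (huR : ∀ i, Reg 2 (u i)) (h0 : ∀ i x, |u i 0 x| ≤ M)
    (hpde : ∀ i t x, 0 < t → HasDerivAt (fun s => u i s x)
        (ν * ∑ j, pd (pd (u i t) j) j x - flux χ u i t x) t)
    (i : Fin n) {t : ℝ} (ht : 0 ≤ t) (x : E n) : |u i t x| ≤ M := by
  have up := maximum_principle hν (huR i) (b := fun j t x => χ (u j t x))
    (fun j t x => hχ.abs_le _) (fun x => (abs_le.1 (h0 i x)).2)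
    (fun t x ht => hpde i t x ht) ht x
  have hpn : ∀ t j, pd (fun x => -u i t x) j = fun x => -pd (u i t) j x := fun t j => by
    ext x; exact pd_neg _ _ _
  have hpn2 : ∀ t j k, pd (fun x => -pd (u i t) j x) k = fun x => -pd (pd (u i t) j) k x :=
    fun t j k => by ext x; exact pd_neg _ _ _
  have lo := maximum_principle (M := M) hν (huR i).neg (b := fun j t x => χ (u j t x))
    (fun j t x => hχ.abs_le _) (fun x => by linarith [(abs_le.1 (h0 i x)).1])
    (fun t x ht => by
      convert! (hpde i t x ht).neg using 1
      simp only [hpn, hpn2, flux, mul_neg, Finset.sum_neg_distrib]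
      ring) ht x
  exact abs_le.2 ⟨by linarith, up⟩

lemma exp_sum_step_le {K B M : ℝ} (hK : 0 < K) (hB : 0 ≤ B) (hM : 0 ≤ M) {l : ℕ} (hl : 1 ≤ l)
    {T : ℝ} (hT : T ≤ 1 / (4 * (K + B * Real.exp 1 + 1)) * (1 + Real.log l)) :
    B * Real.exp (2 * K * T) ≤ (K + B * Real.exp 1 + 1) * (M + 1 + l) := by
  have hl' : (1 : ℝ) ≤ l := by exact_mod_cast hl
  have hlog : 0 ≤ Real.log l := Real.log_nonneg hl'
  have hBe : 0 ≤ B * Real.exp 1 := by positivity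
  have h1 : 2 * K * (1 / (4 * (K + B * Real.exp 1 + 1))) ≤ 1 := by
    rw [mul_one_div, div_le_one (by positivity)]
    linarith
  have hexp : Real.exp (2 * K * T) ≤ Real.exp 1 * l := by
    rw [← Real.exp_log (show (0 : ℝ) < l by linarith), ← Real.exp_add, Real.exp_le_exp]
    calc 2 * K * T ≤ 2 * K * (1 / (4 * (K + B * Real.exp 1 + 1)) * (1 + Real.log l)) := by gcongr
      _ = 2 * K * (1 / (4 * (K + B * Real.exp 1 + 1))) * (1 + Real.log l) := by ring
      _ ≤ 1 * (1 + Real.log l) := by gcongr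
      _ = _ := one_mul _
  calc B * Real.exp (2 * K * T) ≤ B * (Real.exp 1 * l) := by gcongr
    _ = B * Real.exp 1 * l := by ring
    _ ≤ (K + B * Real.exp 1 + 1) * (M + 1 + l) := by gcongr <;> linarith

end Growth

/-- Global existence for the multivariate viscous Burgers system with smooth,
polynomially decaying data: there is a global classical solution `u` with
`u(0,·) = h`, and there are constants `C₀ ≥ max_i sup_x |hᵢ|` and `C*ₙ > 0` such that
with time steps `ρ_l = 1/(4 C*ₙ (C₀ + l - 1))` and `T_l = ρ₁ + ⋯ + ρ_l → ∞`
one has `max_i |uᵢ|_{1,2;[0,T_l]×ℝⁿ} ≤ C*ₙ (C₀ + l)` for all `l ≥ 1`. -/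
theorem statement_0 (n : ℕ) (hn : 1 ≤ n) (ν : ℝ) (hν : 0 < ν)
    (h : Fin n → E n → ℝ)
    (hsmooth : ∀ i, ContDiff ℝ (⊤ : ℕ∞) (h i))
    (hdecay : ∀ (i : Fin n) (m K : ℕ), ∃ C : ℝ, ∀ x,
      ‖iteratedFDeriv ℝ m (h i) x‖ ≤ C / (1 + ‖x‖) ^ K) :
    ∃ (u : Fin n → ℝ → E n → ℝ) (C₀ Cn : ℝ),
      0 < Cn ∧
      (∀ i x, |h i x| ≤ C₀) ∧
      -- u is a classical solution on [0,∞) × ℝⁿ :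
      (∀ i, ContinuousOn (fun p : ℝ × E n => u i p.1 p.2) (Ici 0 ×ˢ univ)) ∧
      (∀ i x, ∀ t ∈ Ioi (0:ℝ), DifferentiableAt ℝ (fun s => u i s x) t) ∧
      (∀ i, ∀ t ∈ Ici (0:ℝ), Differentiable ℝ (u i t) ∧ ∀ j,
        Differentiable ℝ (pd (u i t) j) ∧ Continuous (pd (u i t) j) ∧
        ∀ k, Continuous (pd (pd (u i t) j) k)) ∧
      (∀ i x, ∀ t ∈ Ioi (0:ℝ), deriv (fun s => u i s x) t =
        ν * ∑ j, pd (pd (u i t) j) j x - ∑ j, u j t x * pd (u i t) j x) ∧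
      (∀ i x, u i 0 x = h i x) ∧
      -- the time partition T_l = Σ_{k=1}^l ρ_k with ρ_k = 1/(4 C*ₙ (C₀+k−1)) tends to ∞ :
      Tendsto (fun l : ℕ => ∑ k ∈ Finset.Icc 1 l, 1 / (4 * Cn * (C₀ + (k:ℝ) - 1)))
        atTop atTop ∧
      -- at most linear growth of the |·|_{1,2} norm in the time-step index l :
      (∀ l : ℕ, 1 ≤ l → ∀ i,
        norm12 (∑ k ∈ Finset.Icc 1 l, 1 / (4 * Cn * (C₀ + (k:ℝ) - 1))) (u i)
          ≤ Cn * (C₀ + l)) := by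
  have hh : ∀ m i, Reg m fun _ => h i := fun m i =>
    Reg.of_bounded_iteratedFDeriv (hsmooth i) fun k => by
      obtain ⟨C, hC⟩ := hdecay i k 0
      exact ⟨C, fun x => by simpa using hC x⟩
  obtain ⟨M, H, hM, hH0, hMh, hH1, hH2⟩ := exists_data_bounds hh
  obtain ⟨χ, L, hχ, hχid⟩ := exists_cutoff hM
  have hlim := (tendsto_smoothing n ν).mul_const (n * L)
  rw [zero_mul] at hlim
  have hlim2 := hlim.comp (tendsto_id.const_mul_atTop (show (0 : ℝ) < 2 by norm_num))
  obtain ⟨K, hK1, hK2, hK⟩ := ((hlim.eventually_le_const (by norm_num : (0 : ℝ) < 1 / 2)).and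
    ((hlim2.eventually_le_const (by norm_num : (0 : ℝ) < 1 / 2)).and (eventually_gt_atTop 0))).exists
  obtain ⟨u, huR, hub, hu0, hpde⟩ :=
    exists_truncated_solution hν hχ hh hK hK1 hK2 hH0 hH1 hH2
  have huM : ∀ i t x, 0 ≤ t → |u i t x| ≤ M := fun i t x ht =>
    abs_le_of_truncated hν hχ huR (fun i x => by rw [hu0 i 0 le_rfl]; exact hMh i x) hpde i ht x
  have hflux : ∀ i t x, 0 ≤ t → flux χ u i t x = ∑ j, u j t x * pd (u i t) j x :=
    fun i t x ht => Finset.sum_congr rfl fun j _ => by rw [hχid _ (huM j t x ht)]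
  have hL := hχ.nonneg
  obtain ⟨B, hB0, hB⟩ : ∃ B, 0 ≤ B ∧
      ∀ T, 0 ≤ T → ∀ i, norm12 T (u i) ≤ B * Real.exp (2 * K * T) :=
    ⟨_, by positivity, fun T hT i => norm12_le hν hχ hK hH0 hM hT hub huM hu0 hpde i⟩
  have hCn0 : 0 < K + B * Real.exp 1 + 1 := by positivity
  refine ⟨u, M + 1, K + B * Real.exp 1 + 1, hCn0, fun i x => (hMh i x).trans (by linarith),
    fun i => (huR i).1.cont.continuousOn, fun i x t ht => (hpde i t x ht).differentiableAt,
    fun i t _ => ⟨(huR i).2.1 t, fun j => ⟨((huR i).2.2 j).2.1 t,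
      Reg.continuous_fixed ((huR i).2.2 j) t,
      fun k => Reg.continuous_fixed (((huR i).2.2 j).2.2 k) t⟩⟩,
    fun i x t ht => by rw [(hpde i t x ht).deriv, hflux i t x (le_of_lt ht)],
    fun i x => by rw [hu0 i 0 le_rfl], tendsto_sum_step hCn0 hM, fun l hl i => ?_⟩
  refine (hB _ (Finset.sum_nonneg fun k _ => ?_) i).trans
    (exp_sum_step_le hK hB0 hM hl (sum_step_le hCn0 hM l))
  have : 0 ≤ M + 1 + (k : ℝ) - 1 := by have := Nat.cast_nonneg (α := ℝ) k; linarith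
  positivity
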